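/- arXiv:2411.01323 — 4 statements merged into one kernel-verified Lean document; each statement's English description precedes it below -/
import Mathlib

section
/- Let (V, f) be a finite-dimensional nondegenerate symmetric bilinear space over a field K with char K ≠ 2, let φ ∈ O(V), and let σ ∈ O(V) be an involution with σφσ⁻¹ = φ⁻¹. Then V has an orthogonal decomposition V = U₁ ⊥ U₂ ⊥ … ⊥ U_m where each U_j is a nondegenerate subspace invariant under both φ and σ, and the restriction of φ to each U_j is orthogonally indecomposable. -/
open Polynomial Module

namespace Biref

variable {K V : Type*} [Field K] [AddCommGroup V] [Module K V]

/-- The orthogonal group of a bilinear form: all linear automorphisms preserving `f`. -/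
def orthGroup (f : LinearMap.BilinForm K V) : Subgroup (V ≃ₗ[K] V) where
  carrier := {φ | ∀ x y : V, f (φ x) (φ y) = f x y}
  one_mem' := fun _ _ => rfl
  mul_mem' := by
    intro a b ha hb x y
    simpa using (ha (b x) (b y)).trans (hb x y)
  inv_mem' := by
    intro a ha x y
    show f (a.symm x) (a.symm y) = f x y
    conv_rhs => rw [← a.apply_symm_apply x, ← a.apply_symm_apply y]
    exact (ha _ _).symm

/-- The special orthogonal group: isometries of determinant 1. -/
def specialOrthGroup (f : LinearMap.BilinForm K V) : Subgroup (V ≃ₗ[K] V) where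
  carrier := {φ | (∀ x y : V, f (φ x) (φ y) = f x y) ∧
      LinearMap.det (φ : V →ₗ[K] V) = 1}
  one_mem' := ⟨fun _ _ => rfl, by simp⟩
  mul_mem' := by
    rintro a b ⟨ha, ha'⟩ ⟨hb, hb'⟩
    refine ⟨fun x y => by simpa using (ha (b x) (b y)).trans (hb x y), ?_⟩
    rw [LinearEquiv.coe_toLinearMap_mul, map_mul, ha', hb', one_mul]
  inv_mem' := by
    rintro a ⟨ha, ha'⟩
    refine ⟨fun x y => ?_, ?_⟩
    · show f (a.symm x) (a.symm y) = f x y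
      conv_rhs => rw [← a.apply_symm_apply x, ← a.apply_symm_apply y]
      exact (ha _ _).symm
    · have h1 : LinearMap.det ((a⁻¹ * a : V ≃ₗ[K] V) : V →ₗ[K] V) = 1 := by
        rw [inv_mul_cancel, LinearEquiv.coe_toLinearMap_one, LinearMap.det_id]
      rw [LinearEquiv.coe_toLinearMap_mul, map_mul, ha', mul_one] at h1
      exact h1

/-- The commutator subgroup `Ω(V)` of the orthogonal group. -/
def omegaGroup (f : LinearMap.BilinForm K V) : Subgroup (V ≃ₗ[K] V) :=
  ⁅orthGroup f, orthGroup f⁆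

/-- `g` is a product of two involutions lying in the subgroup `H`. -/
def IsBireflectionalIn {G : Type*} [Group G] (H : Subgroup G) (g : G) : Prop :=
  ∃ σ τ : G, σ ∈ H ∧ τ ∈ H ∧ σ ^ 2 = 1 ∧ τ ^ 2 = 1 ∧ g = σ * τ

/-- `g` is bireflectional in the group `G`. -/
def IsBireflectional {G : Type*} [Group G] (g : G) : Prop :=
  ∃ σ τ : G, σ ^ 2 = 1 ∧ τ ^ 2 = 1 ∧ g = σ * τ

/-- `g` is reversed by some element of `H`. -/
def IsReversibleIn {G : Type*} [Group G] (H : Subgroup G) (g : G) : Prop :=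
  ∃ α : G, α ∈ H ∧ α * g * α⁻¹ = g⁻¹

/-- A subspace is invariant under an endomorphism. -/
def Invt (ψ : V →ₗ[K] V) (U : Submodule K V) : Prop :=
  ∀ x ∈ U, ψ x ∈ U

/-- The discriminant of a (finite-dimensional, nondegenerate) bilinear space is the class
of `d` in `K*/(K*)²`: some Gram determinant equals `d` times a nonzero square. -/
def HasDisc (f : LinearMap.BilinForm K V) (d : K) : Prop :=
  ∃ (b : Basis (Fin (Module.finrank K V)) K V) (c : Kˣ),
    (Matrix.of fun i j => f (b i) (b j)).det = d * (c : K) ^ 2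

/-- A nondegenerate symmetric bilinear space is hyperbolic iff its Witt index is half its
dimension, i.e. there is a totally isotropic subspace of half the dimension. -/
def IsHyperbolicSpace (f : LinearMap.BilinForm K V) : Prop :=
  ∃ W : Submodule K V, (∀ x ∈ W, ∀ y ∈ W, f x y = 0) ∧
    2 * Module.finrank K W = Module.finrank K V

/-- The multiplicity of `p ^ d` as an elementary divisor of `φ`. -/
noncomputable def edMult (φ : Module.End K V) (p : K[X]) (d : ℕ) : ℕ :=
  (2 * Module.finrank K (LinearMap.ker (Polynomial.aeval φ p ^ d))
    - Module.finrank K (LinearMap.ker (Polynomial.aeval φ p ^ (d + 1)))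
    - Module.finrank K (LinearMap.ker (Polynomial.aeval φ p ^ (d - 1)))) / p.natDegree

/-- `n_j(φ)`: the number of elementary divisors `(x ± 1) ^ d` of `φ` with `d ≡ j mod 8`,
counted with multiplicity. -/
noncomputable def nPM [FiniteDimensional K V] (φ : Module.End K V) (j : ℕ) : ℕ :=
  ∑ d ∈ Finset.range (Module.finrank K V + 1),
    if d % 8 = j % 8 then edMult φ (X - 1) d + edMult φ (X + 1) d else 0

/-- The Fitting one space `Bahn^∞(ψ) = ⋂ⱼ im (ψ - 1)^j`. -/
noncomputable def bahnInf (ψ : Module.End K V) : Submodule K V :=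
  ⨅ j : ℕ, LinearMap.range ((ψ - 1) ^ j)

/-- The `K[x]`-submodule generated by `v` (`x` acting as `ψ`). -/
def cycSub (ψ : Module.End K V) (v : V) : Submodule K V :=
  Submodule.span K (Set.range fun n : ℕ => (ψ ^ n) v)

/-- `V` is a cyclic `K[x]`-module, `x` acting as `ψ`. -/
def IsCyclicEnd (ψ : Module.End K V) : Prop :=
  ∃ v : V, cycSub ψ v = ⊤

/-- `V` is a direct sum of two cyclic `K[x]`-submodules, `x` acting as `ψ`. -/
def IsBicyclicEnd (ψ : Module.End K V) : Prop :=
  ∃ v w : V, cycSub ψ v ⊓ cycSub ψ w = ⊥ ∧ cycSub ψ v ⊔ cycSub ψ w = ⊤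

/-- `V` is an indecomposable `K[x]`-module, `x` acting as `ψ`. -/
def ModIndec (ψ : Module.End K V) : Prop :=
  (⊥ : Submodule K V) ≠ ⊤ ∧
    ¬∃ A B : Submodule K V, Invt ψ A ∧ Invt ψ B ∧ A ≠ ⊥ ∧ B ≠ ⊥ ∧ A ⊓ B = ⊥ ∧ A ⊔ B = ⊤

/-- `ψ` is orthogonally indecomposable w.r.t. `f`: `V ≠ 0` and the only nondegenerate
invariant subspaces are `0` and `V`. -/
def OrthIndec (f : LinearMap.BilinForm K V) (ψ : Module.End K V) : Prop :=
  (⊥ : Submodule K V) ≠ ⊤ ∧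
    ∀ U : Submodule K V, Invt ψ U → (f.restrict U).Nondegenerate → U = ⊥ ∨ U = ⊤

/-- The Witt index: the dimension of a maximal totally isotropic subspace. -/
noncomputable def wittIndex (f : LinearMap.BilinForm K V) : ℕ :=
  sSup {n | ∃ W : Submodule K V, (∀ x ∈ W, ∀ y ∈ W, f x y = 0) ∧ Module.finrank K W = n}


section Helpers

variable {K W : Type*} [Field K] [AddCommGroup W] [Module K W]

/-- Elementary nondegeneracy of a subspace. -/
def ND (f : LinearMap.BilinForm K W) (U : Submodule K W) : Prop :=
  ∀ x ∈ U, (∀ y ∈ U, f x y = 0) → x = 0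

/-- The working hypotheses, in elementary form. -/
structure Setup (f : LinearMap.BilinForm K W) (φ ψ σ : Module.End K W) : Prop where
  two : (2 : K) ≠ 0
  symm : ∀ x y, f x y = f y x
  nd : ∀ x, (∀ y, f x y = 0) → x = 0
  h1 : ∀ x, φ (ψ x) = x
  h2 : ∀ x, ψ (φ x) = x
  adj : ∀ x y, f (φ x) y = f x (ψ y)
  sadj : ∀ x y, f (σ x) y = f x (σ y)
  ss : ∀ x, σ (σ x) = x
  sf : ∀ x, σ (φ x) = ψ (σ x)
  sp : ∀ x, σ (ψ x) = φ (σ x)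

/-- No proper nondegenerate invariant subspace for the pair. -/
def Irr (f : LinearMap.BilinForm K W) (φ ψ σ : Module.End K W) : Prop :=
  ∀ U : Submodule K W, Invt φ U → Invt ψ U → Invt σ U → ND f U → U = ⊥ ∨ U = ⊤

/-- No proper nondegenerate invariant subspace. -/
def PIndec (f : LinearMap.BilinForm K W) (φ ψ : Module.End K W) : Prop :=
  ∀ U : Submodule K W, Invt φ U → Invt ψ U → ND f U → U = ⊥ ∨ U = ⊤

theorem aeval_inv {T : Module.End K W} {U : Submodule K W} (h : Invt T U) (r : K[X]) :
    Invt (aeval T r) U := by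
  induction r using Polynomial.induction_on' with
  | add p q hp hq =>
    intro x hx
    rw [map_add, LinearMap.add_apply]
    exact U.add_mem (hp x hx) (hq x hx)
  | monomial n a =>
    intro x hx
    rw [aeval_monomial, Module.End.mul_apply, Module.algebraMap_end_apply]
    refine U.smul_mem _ ?_
    induction n with
    | zero => simpa using hx
    | succ n ih => rw [pow_succ', Module.End.mul_apply]; exact h _ ih

theorem aeval_adj {f : LinearMap.BilinForm K W} {T : Module.End K W}
    (h : ∀ x y, f (T x) y = f x (T y)) (r : K[X]) :
    ∀ x y, f (aeval T r x) y = f x (aeval T r y) := by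
  induction r using Polynomial.induction_on' with
  | add p q hp hq =>
    intro x y
    simp only [map_add, LinearMap.add_apply, hp x y, hq x y]
  | monomial n a =>
    intro x y
    simp only [aeval_monomial, Module.End.mul_apply, Module.algebraMap_end_apply, map_smul,
      LinearMap.smul_apply]
    congr 1
    induction n generalizing x y with
    | zero => simp
    | succ n ih =>
      rw [pow_succ', Module.End.mul_apply, h, ih, ← Module.End.mul_apply, ← pow_succ,
        ← pow_succ']

theorem aeval_comm {T Q : Module.End K W} (h : ∀ x, Q (T x) = T (Q x)) (r : K[X]) :
    ∀ x, Q (aeval T r x) = aeval T r (Q x) := by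
  induction r using Polynomial.induction_on' with
  | add p q hp hq =>
    intro x
    simp only [map_add, LinearMap.add_apply, hp x, hq x]
  | monomial n a =>
    intro x
    simp only [aeval_monomial, Module.End.mul_apply, Module.algebraMap_end_apply, map_smul]
    congr 1
    induction n generalizing x with
    | zero => simp
    | succ n ih =>
      rw [pow_succ', Module.End.mul_apply, h, ih, Module.End.mul_apply]

theorem nd_iff {f : LinearMap.BilinForm K W} (hs : ∀ x y, f x y = f y x) (U : Submodule K W) :
    (f.restrict U).Nondegenerate ↔ ND f U := by
  constructor
  · intro h x hx hy
    have := h.1 ⟨x, hx⟩ (fun y => by simpa using hy y y.2)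
    simpa using this
  · intro h
    constructor
    · intro x hx
      exact Subtype.ext (h x x.2 fun y hy => by simpa using hx ⟨y, hy⟩)
    · intro x hx
      exact Subtype.ext (h x x.2 fun y hy => by rw [hs]; simpa using hx ⟨y, hy⟩)

theorem nd_split [FiniteDimensional K W] {f : LinearMap.BilinForm K W}
    (hs : ∀ x y, f x y = f y x) {U : Submodule K W} (h : ND f U) (v : W) :
    ∃ a ∈ U, ∃ b, v = a + b ∧ ∀ u ∈ U, f u b = 0 := by
  have hc := f.isCompl_orthogonal_of_restrict_nondegenerate
    (LinearMap.BilinForm.IsSymm.isRefl ⟨hs⟩) ((nd_iff hs U).2 h)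
  have hv : v ∈ U ⊔ f.orthogonal U := by rw [hc.sup_eq_top]; trivial
  obtain ⟨a, ha, b, hb, rfl⟩ := Submodule.mem_sup.1 hv
  exact ⟨a, ha, b, rfl, fun u hu => hb u hu⟩

variable {f : LinearMap.BilinForm K W} {φ ψ σ : Module.End K W}

namespace Setup

theorem adj' (h : Setup f φ ψ σ) (x y : W) : f (ψ x) y = f x (φ y) := by
  rw [h.symm, ← h.adj, h.symm]

theorem Sadj (h : Setup f φ ψ σ) (x y : W) : f ((φ + ψ) x) y = f x ((φ + ψ) y) := by
  simp only [LinearMap.add_apply, map_add, h.adj, h.adj']; ring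

theorem Dadj (h : Setup f φ ψ σ) (x y : W) : f ((φ - ψ) x) y = - f x ((φ - ψ) y) := by
  simp only [LinearMap.sub_apply, map_sub, h.adj, h.adj']; ring

theorem Scomm (h : Setup f φ ψ σ) (x : W) : σ ((φ + ψ) x) = (φ + ψ) (σ x) := by
  simp only [LinearMap.add_apply, map_add, h.sf, h.sp]; abel

theorem Dcomm (h : Setup f φ ψ σ) (x : W) : σ ((φ - ψ) x) = - (φ - ψ) (σ x) := by
  simp only [LinearMap.sub_apply, map_sub, h.sf, h.sp]; abel

theorem SD (h : Setup f φ ψ σ) (x : W) : (φ - ψ) ((φ + ψ) x) = (φ + ψ) ((φ - ψ) x) := by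
  simp only [LinearMap.add_apply, LinearMap.sub_apply, map_add, map_sub, h.h1, h.h2]; abel

theorem Sf (h : Setup f φ ψ σ) (x : W) : φ ((φ + ψ) x) = (φ + ψ) (φ x) := by
  simp only [LinearMap.add_apply, map_add, h.h1, h.h2]

theorem Sp (h : Setup f φ ψ σ) (x : W) : ψ ((φ + ψ) x) = (φ + ψ) (ψ x) := by
  simp only [LinearMap.add_apply, map_add, h.h1, h.h2]

/-- Eigenvectors of `σ` for opposite eigenvalues are orthogonal. -/
theorem opp (h : Setup f φ ψ σ) {e : K} (he : e * e = 1) {a b : W} (ha : σ a = e • a)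
    (hb : σ b = -(e • b)) : f a b = 0 := by
  have h1 : f (σ a) (σ b) = f a b := by rw [h.sadj, h.ss]
  rw [ha, hb] at h1
  simp only [map_smul, map_neg, LinearMap.smul_apply, smul_eq_mul] at h1
  have : (2 : K) * f a b = 0 := by linear_combination -h1 - (f a b) * he
  exact (mul_eq_zero.1 this).resolve_left h.two

theorem half (h : Setup f φ ψ σ) (v : W) :
    ∃ a b, v = a + b ∧ σ a = a ∧ σ b = -b := by
  have h2 := h.two
  refine ⟨(2⁻¹ : K) • (v + σ v), (2⁻¹ : K) • (v - σ v), ?_, ?_, ?_⟩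
  · rw [← smul_add]
    have : v + σ v + (v - σ v) = (2 : K) • v := by rw [two_smul]; abel
    rw [this, smul_smul, inv_mul_cancel₀ h2, one_smul]
  · rw [map_smul, map_add, h.ss, add_comm]
  · rw [map_smul, map_sub, h.ss, ← smul_neg, neg_sub]

theorem eig (h : Setup f φ ψ σ) {E : Module.End K W} (hE : E ≠ 0)
    (ha : ∀ x y, f (E x) y = f x (E y)) (hc : ∀ x, σ (E x) = E (σ x)) :
    ∃ (e : K) (x : W), e * e = 1 ∧ σ x = e • x ∧ f (E x) x ≠ 0 := by
  by_contra! hcon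
  have pol : ∀ e : K, e * e = 1 → ∀ x y, σ x = e • x → σ y = e • y → f (E x) y = 0 := by
    intro e he x y hx hy
    have h1 := hcon e x he hx
    have h2 := hcon e y he hy
    have h3 := hcon e (x + y) he (by rw [map_add, hx, hy, smul_add])
    simp only [map_add, LinearMap.add_apply] at h3
    have h4 : f (E y) x = f (E x) y := by rw [ha, h.symm]
    have : (2 : K) * f (E x) y = 0 := by rw [h4] at h3; linear_combination h3 - h1 - h2
    exact (mul_eq_zero.1 this).resolve_left h.two
  apply hE
  ext v
  rw [LinearMap.zero_apply]
  apply h.nd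
  intro w
  obtain ⟨a, b, rfl, h1, h2⟩ := h.half v
  obtain ⟨c, d, rfl, h3, h4⟩ := h.half w
  simp only [map_add, LinearMap.add_apply]
  rw [pol 1 (by ring) a c (by simpa) (by simpa), pol (-1) (by ring) b d (by simpa) (by simpa),
    h.opp (e := 1) (by ring) (a := E a) (b := d) (by simp [hc, h1]) (by simpa),
    h.opp (e := -1) (by ring) (a := E b) (b := c) (by simp [hc, h2]) (by simpa)]
  simp

theorem fitting [FiniteDimensional K W] (h : Setup f φ ψ σ) (hirr : Irr f φ ψ σ)
    {T : Module.End K W} (ha : ∀ x y, f (T x) y = f x (T y)) (hc : ∀ x, σ (T x) = T (σ x))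
    (hf : ∀ x, φ (T x) = T (φ x)) (hp : ∀ x, ψ (T x) = T (ψ x)) :
    IsNilpotent T ∨ Function.Injective T := by
  obtain ⟨n, hn⟩ := Filter.eventually_atTop.1 T.eventually_isCompl_ker_pow_range_pow
  have hn := hn (n + 1) (by omega)
  have e : aeval T (X ^ (n + 1) : K[X]) = T ^ (n + 1) := by simp
  have ha' := aeval_adj ha (X ^ (n + 1))
  have hc' := aeval_comm hc (X ^ (n + 1))
  have hf' := aeval_comm hf (X ^ (n + 1))
  have hp' := aeval_comm hp (X ^ (n + 1))
  rw [e] at ha' hc' hf' hp'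
  have key := hirr (LinearMap.ker (T ^ (n + 1)))
    (by intro x hx; rw [LinearMap.mem_ker] at *; rw [← hf', hx, map_zero])
    (by intro x hx; rw [LinearMap.mem_ker] at *; rw [← hp', hx, map_zero])
    (by intro x hx; rw [LinearMap.mem_ker] at *; rw [← hc', hx, map_zero])
    (by
      intro x hx hy
      apply h.nd
      intro v
      have hv : v ∈ LinearMap.ker (T ^ (n + 1)) ⊔ LinearMap.range (T ^ (n + 1)) := by
        rw [hn.sup_eq_top]; trivial
      obtain ⟨a, ha1, b, ⟨c, rfl⟩, rfl⟩ := Submodule.mem_sup.1 hv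
      rw [map_add, hy a ha1, ← ha', LinearMap.mem_ker.1 hx]
      simp)
  rcases key with key | key
  · right
    rw [← LinearMap.ker_eq_bot, eq_bot_iff, ← key]
    intro x hx
    rw [LinearMap.mem_ker] at *
    rw [pow_succ, Module.End.mul_apply, hx, map_zero]
  · left
    exact ⟨n + 1, LinearMap.ker_eq_top.1 key⟩

end Setup

/-- the `K[S]`-cyclic subspace -/
noncomputable def cA (S : Module.End K W) (x : W) : Submodule K W :=
  LinearMap.range ((LinearMap.applyₗ x).comp (aeval S : K[X] →ₐ[K] Module.End K W).toLinearMap)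

theorem mem_cA {S : Module.End K W} {x v : W} : v ∈ cA S x ↔ ∃ r : K[X], aeval S r x = v := by
  simp [cA, LinearMap.mem_range]

/-- the `K[φ]`-cyclic subspace -/
noncomputable def cW (φ ψ : Module.End K W) (x : W) : Submodule K W :=
  cA (φ + ψ) x ⊔ (cA (φ + ψ) x).map (φ - ψ)

theorem mem_cW {x v : W} : v ∈ cW φ ψ x ↔ ∃ r s : K[X],
    aeval (φ + ψ) r x + (φ - ψ) (aeval (φ + ψ) s x) = v := by
  constructor
  · intro hv
    obtain ⟨a, ha, b, ⟨c, hc, rfl⟩, rfl⟩ := Submodule.mem_sup.1 hv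
    obtain ⟨r, rfl⟩ := mem_cA.1 ha
    obtain ⟨s, rfl⟩ := mem_cA.1 hc
    exact ⟨r, s, rfl⟩
  · rintro ⟨r, s, rfl⟩
    exact Submodule.add_mem_sup (mem_cA.2 ⟨r, rfl⟩)
      (Submodule.mem_map_of_mem (mem_cA.2 ⟨s, rfl⟩))

theorem self_mem_cW (x : W) : x ∈ cW φ ψ x := mem_cW.2 ⟨1, 0, by simp⟩

theorem cW_le {x : W} {Q : Submodule K W} (hx : x ∈ Q) (h1 : Invt φ Q) (h2 : Invt ψ Q) :
    cW φ ψ x ≤ Q := by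
  intro v hv
  obtain ⟨r, s, rfl⟩ := mem_cW.1 hv
  have hS : Invt (φ + ψ) Q := fun x hx => Q.add_mem (h1 x hx) (h2 x hx)
  have hD : Invt (φ - ψ) Q := fun x hx => Q.sub_mem (h1 x hx) (h2 x hx)
  exact Q.add_mem (aeval_inv hS _ _ hx) (hD _ (aeval_inv hS _ _ hx))

namespace Setup

theorem cW_S (h : Setup f φ ψ σ) (x : W) : Invt (φ + ψ) (cW φ ψ x) := by
  intro v hv
  obtain ⟨r, s, rfl⟩ := mem_cW.1 hv
  refine mem_cW.2 ⟨X * r, X * s, ?_⟩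
  rw [map_mul, map_mul, aeval_X, map_add, Module.End.mul_apply, Module.End.mul_apply, h.SD]

theorem DD (h : Setup f φ ψ σ) (x : W) :
    (φ - ψ) ((φ - ψ) x) = aeval (φ + ψ) (X * X - C 4 : K[X]) x := by
  have e : aeval (φ + ψ) (X * X - C 4 : K[X]) = (φ + ψ) * (φ + ψ) - algebraMap K _ 4 := by simp
  rw [e]
  simp only [LinearMap.add_apply, LinearMap.sub_apply, Module.End.mul_apply,
    Module.algebraMap_end_apply, map_add, map_sub, h.h1, h.h2]
  module

theorem cW_D (h : Setup f φ ψ σ) (x : W) : Invt (φ - ψ) (cW φ ψ x) := by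
  intro v hv
  obtain ⟨r, s, rfl⟩ := mem_cW.1 hv
  refine mem_cW.2 ⟨(X * X - C 4) * s, r, ?_⟩
  rw [map_mul, map_add, h.DD, Module.End.mul_apply, add_comm]

theorem cW_f (h : Setup f φ ψ σ) (x : W) : Invt φ (cW φ ψ x) := by
  intro v hv
  have e : φ v = (2⁻¹ : K) • ((φ + ψ) v + (φ - ψ) v) := by
    have : (φ + ψ) v + (φ - ψ) v = (2 : K) • φ v := by
      simp only [LinearMap.add_apply, LinearMap.sub_apply, two_smul]; abel
    rw [this, smul_smul, inv_mul_cancel₀ h.two, one_smul]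
  rw [e]
  exact Submodule.smul_mem _ _ (Submodule.add_mem _ (h.cW_S x v hv) (h.cW_D x v hv))

theorem cW_p (h : Setup f φ ψ σ) (x : W) : Invt ψ (cW φ ψ x) := by
  intro v hv
  have e : ψ v = (2⁻¹ : K) • ((φ + ψ) v - (φ - ψ) v) := by
    have : (φ + ψ) v - (φ - ψ) v = (2 : K) • ψ v := by
      simp only [LinearMap.add_apply, LinearMap.sub_apply, two_smul]; abel
    rw [this, smul_smul, inv_mul_cancel₀ h.two, one_smul]
  rw [e]
  exact Submodule.smul_mem _ _ (Submodule.sub_mem _ (h.cW_S x v hv) (h.cW_D x v hv))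

theorem eA (h : Setup f φ ψ σ) {x : W} {e : K} (hx : σ x = e • x) (r : K[X]) :
    σ (aeval (φ + ψ) r x) = e • aeval (φ + ψ) r x := by
  rw [aeval_comm h.Scomm, hx, map_smul]

theorem eD (h : Setup f φ ψ σ) {x : W} {e : K} (hx : σ x = e • x) (r : K[X]) :
    σ ((φ - ψ) (aeval (φ + ψ) r x)) = -(e • (φ - ψ) (aeval (φ + ψ) r x)) := by
  rw [h.Dcomm, h.eA hx, map_smul]

theorem cW_s (h : Setup f φ ψ σ) {x : W} {e : K} (hx : σ x = e • x) : Invt σ (cW φ ψ x) := by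
  intro v hv
  obtain ⟨r, s, rfl⟩ := mem_cW.1 hv
  refine mem_cW.2 ⟨C e * r, - (C e * s), ?_⟩
  rw [map_add σ, h.eA hx, h.eD hx]
  simp only [map_mul, aeval_C, map_neg, Module.End.mul_apply, Module.algebraMap_end_apply,
    LinearMap.neg_apply, map_smul]

theorem cyclic [FiniteDimensional K W] (h : Setup f φ ψ σ) (hirr : Irr f φ ψ σ) {x : W} {e : K}
    (he : e * e = 1) (hx : σ x = e • x) (hW : cW φ ψ x = ⊤) : PIndec f φ ψ := by
  intro U hUf hUp hU
  refine hirr U hUf hUp ?_ hU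
  have hS : Invt (φ + ψ) U := fun x hx => U.add_mem (hUf x hx) (hUp x hx)
  have hD : Invt (φ - ψ) U := fun x hx => U.sub_mem (hUf x hx) (hUp x hx)
  obtain ⟨a, ha, b, hab, hb⟩ := nd_split h.symm hU x
  have hsa := aeval_adj h.Sadj
  have hDr : ∀ (r : K[X]) u v, f ((φ - ψ) (aeval (φ + ψ) r u)) v = - f u ((φ - ψ) (aeval (φ + ψ) r v)) := by
    intro r u v
    rw [h.Dadj, hsa, aeval_comm h.SD]
  have h0 : ∀ r : K[X], f a ((φ - ψ) (aeval (φ + ψ) r x)) = 0 := by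
    intro r
    have e1 : f a ((φ - ψ) (aeval (φ + ψ) r b)) = 0 := by
      have := hDr r a b
      rw [hb _ (hD _ (aeval_inv hS r _ ha))] at this
      exact neg_eq_zero.1 this.symm
    have e2 : f a ((φ - ψ) (aeval (φ + ψ) r a)) = 0 := by
      have := hDr r a a
      rw [h.symm] at this
      have : (2 : K) * f a ((φ - ψ) (aeval (φ + ψ) r a)) = 0 := by linear_combination this
      exact (mul_eq_zero.1 this).resolve_left h.two
    rw [hab, map_add, map_add, map_add, e1, e2, add_zero]
  have hsa' : σ a = e • a := by
    rw [← sub_eq_zero]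
    apply h.nd
    intro v
    have hv : v ∈ cW φ ψ x := by rw [hW]; trivial
    obtain ⟨r, s, rfl⟩ := mem_cW.1 hv
    have e1 : f (σ a - e • a) (aeval (φ + ψ) r x) = 0 := by
      rw [h.symm]
      apply h.opp he (h.eA hx r)
      rw [map_sub, h.ss, map_smul, smul_sub, smul_smul, he, one_smul, neg_sub]
    have e2 : f (σ a - e • a) ((φ - ψ) (aeval (φ + ψ) s x)) = 0 := by
      rw [map_sub, LinearMap.sub_apply, h.sadj, h.eD hx, map_neg, map_smul, map_smul,
        LinearMap.smul_apply, h0]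
      simp
    rw [map_add, e1, e2, add_zero]
  intro u hu
  have hv : u ∈ cW φ ψ x := by rw [hW]; trivial
  obtain ⟨r, s, hrs⟩ := mem_cW.1 hv
  have key : u = aeval (φ + ψ) r a + (φ - ψ) (aeval (φ + ψ) s a) := by
    rw [← sub_eq_zero]
    have hm1 : aeval (φ + ψ) r a + (φ - ψ) (aeval (φ + ψ) s a) ∈ U :=
      U.add_mem (aeval_inv hS r _ ha) (hD _ (aeval_inv hS s _ ha))
    apply hU _ (U.sub_mem hu hm1)
    intro y hy
    have e3 : u - (aeval (φ + ψ) r a + (φ - ψ) (aeval (φ + ψ) s a)) =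
        aeval (φ + ψ) r b + (φ - ψ) (aeval (φ + ψ) s b) := by
      rw [← hrs, hab]; simp only [map_add]; abel
    rw [e3, map_add, LinearMap.add_apply, hsa, hDr, h.symm b, h.symm b,
      hb _ (aeval_inv hS r _ hy), hb _ (hD _ (aeval_inv hS s _ hy))]
    simp
  rw [key, map_add, h.eA hsa', h.eD hsa']
  exact U.add_mem (U.smul_mem _ (aeval_inv hS r _ ha))
    (U.neg_mem (U.smul_mem _ (hD _ (aeval_inv hS s _ ha))))

end Setup

theorem socle {S : Module.End K W} {q r : K[X]} (hq : Irreducible q) {n : ℕ} {x : W}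
    (hn : aeval S q ^ (n + 1) = 0) (hr : aeval S r x ≠ 0) :
    ∃ s : K[X], aeval S s (aeval S r x) = (aeval S q ^ n) x := by
  classical
  have hg := EuclideanDomain.gcd_eq_gcd_ab r (q ^ (n + 1))
  obtain ⟨k, hk, hk2⟩ := (dvd_prime_pow hq.prime _).1
    (EuclideanDomain.gcd_dvd_right r (q ^ (n + 1)))
  have hkn : k ≤ n := by
    by_contra hlt
    have : k = n + 1 := by omega
    subst this
    obtain ⟨c, hc⟩ := hk2.symm.dvd.trans (EuclideanDomain.gcd_dvd_left r (q ^ (n + 1)))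
    apply hr
    rw [hc, map_mul, map_pow, hn, zero_mul, LinearMap.zero_apply]
  obtain ⟨c, hc⟩ := hk2.dvd.trans (pow_dvd_pow q hkn)
  refine ⟨EuclideanDomain.gcdA r (q ^ (n + 1)) * c, ?_⟩
  rw [← map_pow, hc, hg, ← Module.End.mul_apply, ← map_mul]
  have : (r * EuclideanDomain.gcdA r (q ^ (n + 1)) +
      q ^ (n + 1) * EuclideanDomain.gcdB r (q ^ (n + 1))) * c =
      EuclideanDomain.gcdA r (q ^ (n + 1)) * c * r +
      q ^ (n + 1) * (EuclideanDomain.gcdB r (q ^ (n + 1)) * c) := by ring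
  rw [this, map_add, map_mul _ (q ^ (n + 1)), map_pow, hn, zero_mul, add_zero]

theorem exists_irr [FiniteDimensional K W] [Nontrivial W] (S : Module.End K W) :
    ∃ q : K[X], Irreducible q ∧ ¬ Function.Injective (aeval S q) := by
  have hint : IsIntegral K S := Algebra.IsIntegral.isIntegral S
  have hne := minpoly.ne_zero hint
  obtain ⟨q, hq, g, hg⟩ := WfDvdMonoid.exists_irreducible_factor (minpoly.not_isUnit K S) hne
  refine ⟨q, hq, fun hinj => ?_⟩
  have h0 : aeval S g = 0 := by
    ext v
    apply hinj
    rw [LinearMap.zero_apply, map_zero, ← Module.End.mul_apply, ← map_mul, ← hg, minpoly.aeval,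
      LinearMap.zero_apply]
  have hg0 : g ≠ 0 := by rintro rfl; simp at hg; exact hne hg
  obtain ⟨c, hc⟩ := minpoly.dvd K S h0
  apply hq.not_isUnit
  refine IsUnit.of_mul_eq_one c ?_
  apply mul_right_cancel₀ hg0
  rw [one_mul]
  conv_rhs => rw [hc, hg]
  ring

theorem exists_nil {T : Module.End K W} [Nontrivial W] (h : IsNilpotent T) :
    ∃ n, T ^ (n + 1) = 0 ∧ T ^ n ≠ 0 := by
  classical
  have hp := Nat.find_spec h
  have hm := fun m => Nat.find_min h (m := m)
  rcases hk : Nat.find h with _ | n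
  · rw [hk, pow_zero] at hp
    exact absurd hp one_ne_zero
  · exact ⟨n, by rwa [hk] at hp, hm n (by omega)⟩

namespace Setup

theorem caseB [FiniteDimensional K W] [Nontrivial W] (h : Setup f φ ψ σ) (hirr : Irr f φ ψ σ)
    (hD : Function.Injective (φ - ψ)) : PIndec f φ ψ := by
  obtain ⟨q, hq, hqi⟩ := exists_irr (φ + ψ)
  have hnil := (h.fitting hirr (aeval_adj h.Sadj q) (aeval_comm h.Scomm q)
    (aeval_comm h.Sf q) (aeval_comm h.Sp q)).resolve_right hqi
  obtain ⟨n, hn, hn'⟩ := exists_nil hnil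
  rw [← map_pow] at hn'
  obtain ⟨e, x, he, hx, hne⟩ := h.eig hn' (aeval_adj h.Sadj _) (aeval_comm h.Scomm _)
  have hA : ∀ r : K[X], (∀ s : K[X], f (aeval (φ + ψ) r x) (aeval (φ + ψ) s x) = 0) →
      aeval (φ + ψ) r x = 0 := by
    intro r hr
    by_contra hr0
    obtain ⟨s, hs⟩ := socle hq hn hr0
    apply hne
    rw [map_pow, ← hs, aeval_adj h.Sadj, hr]
  have hND : ND f (cW φ ψ x) := by
    intro z hz hy
    obtain ⟨r, s, rfl⟩ := mem_cW.1 hz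
    have o : ∀ r s : K[X], f (aeval (φ + ψ) r x) ((φ - ψ) (aeval (φ + ψ) s x)) = 0 :=
      fun r s => h.opp he (h.eA hx r) (h.eD hx s)
    have e1 : aeval (φ + ψ) r x = 0 := by
      apply hA
      intro t
      have := hy (aeval (φ + ψ) t x) (mem_cW.2 ⟨t, 0, by simp⟩)
      rwa [map_add, LinearMap.add_apply, h.symm ((φ - ψ) _), o, add_zero] at this
    have e2 : aeval (φ + ψ) ((X * X - C 4) * s) x = 0 := by
      apply hA
      intro t
      have := hy ((φ - ψ) (aeval (φ + ψ) t x)) (mem_cW.2 ⟨0, t, by simp⟩)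
      rw [map_add, LinearMap.add_apply, o, zero_add, ← neg_eq_zero, h.symm, ← h.Dadj, h.DD,
        aeval_adj h.Sadj, ← Module.End.mul_apply, ← map_mul, h.symm] at this
      convert this using 2
    rw [map_mul, Module.End.mul_apply, ← h.DD] at e2
    have e3 := hD (e2.trans (map_zero (φ - ψ)).symm)
    rw [e1, e3, add_zero]
  rcases hirr _ (h.cW_f x) (h.cW_p x) (h.cW_s hx) hND with h0 | h0
  · exfalso
    have : x ∈ cW φ ψ x := self_mem_cW x
    rw [h0, Submodule.mem_bot] at this
    apply hne
    simp [this]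
  · exact h.cyclic hirr he hx h0

end Setup

theorem ker_exists {N : Module.End K W} {U : Submodule K W} (hU : Invt N U) (hne : U ≠ ⊥)
    {k : ℕ} (hk : N ^ k = 0) : ∃ z ∈ U, z ≠ 0 ∧ N z = 0 := by
  obtain ⟨u, hu, hu0⟩ := Submodule.exists_mem_ne_zero_of_ne_bot hne
  have : ∀ j, ∀ u ∈ U, u ≠ 0 → (N ^ j) u = 0 → ∃ z ∈ U, z ≠ 0 ∧ N z = 0 := by
    intro j
    induction j with
    | zero => intro u _ h1 h2; exact absurd (by simpa using h2) h1
    | succ j ih =>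
      intro u hu h1 h2
      by_cases hN : N u = 0
      · exact ⟨u, hu, h1, hN⟩
      · exact ih (N u) (hU u hu) hN (by rwa [pow_succ, Module.End.mul_apply] at h2)
  exact this k u hu hu0 (by rw [hk]; rfl)

theorem pow_inv {N : Module.End K W} {U : Submodule K W} (hU : Invt N U) (k : ℕ) :
    Invt (N ^ k) U := by
  have := aeval_inv hU (X ^ k)
  simpa using this

theorem core {N M : Module.End K W} {U C : Submodule K W} {k : ℕ}
    (hNM : ∀ x y, f (N x) y = f x (M y)) (hM : Invt M U)
    (hCU : U ≤ C ⊔ U.map N) (hk : N ^ (k + 1) = 0)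
    (hC : ∀ c ∈ C, (∀ v ∈ U, f ((N ^ k) c) v = 0) → c = 0) :
    ND f U ∧ ∀ z ∈ U, N z = 0 → ∃ c ∈ C, z = (N ^ k) c := by
  have hNMp : ∀ j x y, f ((N ^ j) x) y = f x ((M ^ j) y) := by
    intro j
    induction j with
    | zero => simp
    | succ j ih =>
      intro x y
      rw [pow_succ, Module.End.mul_apply, ih, hNM, pow_succ', Module.End.mul_apply]
  have step : ∀ w ∈ U, ∃ c ∈ C, ∃ w' ∈ U, w = c + N w' := by
    intro w hw
    obtain ⟨c, hc, b, ⟨w', hw', rfl⟩, rfl⟩ := Submodule.mem_sup.1 (hCU hw)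
    exact ⟨c, hc, w', hw', rfl⟩
  have hkc : ∀ (c w' : W), (N ^ k) (c + N w') = (N ^ k) c := by
    intro c w'
    rw [map_add, ← Module.End.mul_apply, ← pow_succ, hk, LinearMap.zero_apply, add_zero]
  constructor
  · intro z hz hy
    have : ∀ j ≤ k + 1, ∃ w ∈ U, z = (N ^ j) w := by
      intro j
      induction j with
      | zero => intro _; exact ⟨z, hz, by simp⟩
      | succ j ih =>
        intro hj
        obtain ⟨w, hw, hzw⟩ := ih (by omega)
        obtain ⟨c, hc, w', hw', rfl⟩ := step w hw
        have e : (N ^ (k - j)) z = (N ^ k) c := by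
          rw [hzw, ← Module.End.mul_apply, ← pow_add, Nat.sub_add_cancel (by omega), hkc]
        have hc0 : c = 0 := by
          apply hC c hc
          intro v hv
          rw [← e, hNMp]
          exact hy _ (pow_inv hM _ _ hv)
        refine ⟨w', hw', ?_⟩
        rw [hzw, hc0, zero_add, pow_succ, Module.End.mul_apply]
    obtain ⟨w, _, hw⟩ := this (k + 1) le_rfl
    rw [hw, hk, LinearMap.zero_apply]
  · intro z hz hNz
    have : ∀ j ≤ k, ∃ w ∈ U, z = (N ^ j) w := by
      intro j
      induction j with
      | zero => intro _; exact ⟨z, hz, by simp⟩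
      | succ j ih =>
        intro hj
        obtain ⟨w, hw, hzw⟩ := ih (by omega)
        obtain ⟨c, hc, w', hw', rfl⟩ := step w hw
        have e : (N ^ (k - j)) z = (N ^ k) c := by
          rw [hzw, ← Module.End.mul_apply, ← pow_add, Nat.sub_add_cancel (by omega), hkc]
        have hc0 : c = 0 := by
          apply hC c hc
          intro v hv
          rw [← e, show k - j = (k - j - 1) + 1 by omega, pow_succ, Module.End.mul_apply, hNz,
            map_zero, map_zero, LinearMap.zero_apply]
        refine ⟨w', hw', ?_⟩
        rw [hzw, hc0, zero_add, pow_succ, Module.End.mul_apply]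
    obtain ⟨w, hw, hzw⟩ := this k le_rfl
    obtain ⟨c, hc, w', hw', rfl⟩ := step w hw
    exact ⟨c, hc, by rw [hzw, hkc]⟩

namespace Setup

theorem NM (h : Setup f φ ψ σ) (x y : W) : f ((φ - 1) x) y = f x ((ψ - 1) y) := by
  simp only [LinearMap.sub_apply, map_sub, h.adj, Module.End.one_apply]

theorem sN (h : Setup f φ ψ σ) (x : W) : σ ((φ - 1) x) = (ψ - 1) (σ x) := by
  simp only [LinearMap.sub_apply, map_sub, h.sf, Module.End.one_apply]

theorem Mpow (h : Setup f φ ψ σ) {k : ℕ} (hk : (φ - 1) ^ (k + 1) = 0) :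
    (ψ - 1) ^ k = (-1) ^ k * (φ - 1) ^ k := by
  have hpf : ψ * φ = 1 := LinearMap.ext h.h2
  have hfp : φ * ψ = 1 := LinearMap.ext h.h1
  have hM : ψ - 1 = (-1) * (ψ * (φ - 1)) := by rw [mul_sub, hpf]; simp
  have hcom : Commute ψ (φ - 1) := by
    show ψ * (φ - 1) = (φ - 1) * ψ
    rw [mul_sub, sub_mul, hpf, hfp]; simp
  have h1 : ψ * (φ - 1) ^ k = (φ - 1) ^ k := by
    have : φ * (φ - 1) ^ k = (φ - 1) ^ k := by
      rw [pow_succ', sub_mul, one_mul, sub_eq_zero] at hk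
      exact hk
    conv_lhs => rw [← this]
    rw [← mul_assoc, hpf, one_mul]
  have h2 : ∀ j, ψ ^ j * (φ - 1) ^ k = (φ - 1) ^ k := by
    intro j
    induction j with
    | zero => simp
    | succ j ih => rw [pow_succ, mul_assoc, h1, ih]
  rw [hM, (Commute.neg_one_left _).mul_pow, hcom.mul_pow, h2]

theorem adjpow (h : Setup f φ ψ σ) (k : ℕ) (x y : W) :
    f (((φ - 1) ^ k) x) y = f x (((ψ - 1) ^ k) y) := by
  induction k generalizing x y with
  | zero => simp
  | succ j ih =>
    rw [pow_succ, Module.End.mul_apply, ih, h.NM, pow_succ', Module.End.mul_apply]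

theorem spow (h : Setup f φ ψ σ) (k : ℕ) (x : W) :
    σ (((φ - 1) ^ k) x) = ((ψ - 1) ^ k) (σ x) := by
  induction k generalizing x with
  | zero => simp
  | succ j ih =>
    rw [pow_succ, Module.End.mul_apply, ih, h.sN, pow_succ, Module.End.mul_apply]

theorem invN {U : Submodule K W} (h1 : Invt φ U) : Invt (φ - 1) U := fun x hx =>
  U.sub_mem (h1 x hx) hx

/-- `C + N U` is invariant. -/
theorem invQ (h : Setup f φ ψ σ) {U C : Submodule K W} (hf : Invt φ U) (hp : Invt ψ U)
    (hC : C ≤ U) :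
    Invt φ (C ⊔ U.map (φ - 1)) ∧ Invt ψ (C ⊔ U.map (φ - 1)) := by
  constructor
  · intro v hv
    obtain ⟨c, hc, b, ⟨w, hw, rfl⟩, rfl⟩ := Submodule.mem_sup.1 hv
    have : φ (c + (φ - 1) w) = c + (φ - 1) (c + φ w) := by
      simp only [LinearMap.sub_apply, map_sub, map_add, Module.End.one_apply]; abel
    rw [this]
    exact Submodule.add_mem_sup hc (Submodule.mem_map_of_mem (U.add_mem (hC hc) (hf _ hw)))
  · intro v hv
    obtain ⟨c, hc, b, ⟨w, hw, rfl⟩, rfl⟩ := Submodule.mem_sup.1 hv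
    have : ψ (c + (φ - 1) w) = c + (φ - 1) (- ψ c + ψ w) := by
      simp only [LinearMap.sub_apply, map_sub, map_add, map_neg, Module.End.one_apply, h.h1, h.h2]
      abel
    rw [this]
    exact Submodule.add_mem_sup hc
      (Submodule.mem_map_of_mem (U.add_mem (U.neg_mem (hp _ (hC hc))) (hp _ hw)))

theorem caseA_even [FiniteDimensional K W] (h : Setup f φ ψ σ) (hirr : Irr f φ ψ σ) {k : ℕ}
    (hk : (φ - 1) ^ (k + 1) = 0) (hk' : (φ - 1) ^ k ≠ 0) (hev : Even k) : PIndec f φ ψ := by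
  have hM := h.Mpow hk
  rw [hev.neg_one_pow, one_mul] at hM
  obtain ⟨e, x, he, hx, hne⟩ := h.eig hk' (fun x y => by rw [h.adjpow, hM])
    (fun x => by rw [h.spow, hM])
  have hCU : K ∙ x ≤ cW φ ψ x := (Submodule.span_singleton_le_iff_mem _ _).2 (self_mem_cW x)
  have hQ := h.invQ (h.cW_f x) (h.cW_p x) hCU
  have hND := (core (f := f) h.NM (U := cW φ ψ x) (C := K ∙ x)
    (fun v hv => Submodule.sub_mem _ (h.cW_p x v hv) hv)
    (cW_le (Submodule.mem_sup_left (Submodule.mem_span_singleton_self x)) hQ.1 hQ.2) hk (by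
      intro c hc hv
      obtain ⟨a, rfl⟩ := Submodule.mem_span_singleton.1 hc
      have := hv x (self_mem_cW x)
      rw [map_smul, map_smul, LinearMap.smul_apply, smul_eq_mul] at this
      rw [(mul_eq_zero.1 this).resolve_right hne, zero_smul])).1
  rcases hirr _ (h.cW_f x) (h.cW_p x) (h.cW_s hx) hND with h0 | h0
  · exfalso
    have : x ∈ cW φ ψ x := self_mem_cW x
    rw [h0, Submodule.mem_bot] at this
    apply hne
    simp [this]
  · exact h.cyclic hirr he hx h0

theorem caseA_odd [FiniteDimensional K W] (h : Setup f φ ψ σ) (hirr : Irr f φ ψ σ) {k : ℕ}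
    (hk : (φ - 1) ^ (k + 1) = 0) (hk' : (φ - 1) ^ k ≠ 0) (hodd : Odd k) : PIndec f φ ψ := by
  have hM := h.Mpow hk
  rw [hodd.neg_one_pow, neg_one_mul] at hM
  have hkN : ∀ w, ((φ - 1) ^ k) ((φ - 1) w) = 0 := by
    intro w
    rw [← Module.End.mul_apply, ← pow_succ, hk, LinearMap.zero_apply]
  have hadj := h.adjpow k
  have hsp := h.spow k
  have hinv : ∀ U : Submodule K W, Invt φ U → Invt ((φ - 1) ^ k) U := fun U hU =>
    pow_inv (invN hU) k
  generalize hE : (φ - 1) ^ k = E at *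
  rw [hM] at hadj hsp
  have skew : ∀ x y, f (E x) y = - f x (E y) := by
    intro x y; rw [hadj, LinearMap.neg_apply, map_neg]
  have hsE : ∀ x, σ (E x) = - E (σ x) := fun x => by rw [hsp, LinearMap.neg_apply]
  have alt : ∀ x, f (E x) x = 0 := by
    intro x
    have h1 := skew x x
    rw [h.symm x] at h1
    have : (2 : K) * f (E x) x = 0 := by linear_combination h1
    exact (mul_eq_zero.1 this).resolve_left h.two
  have hex : ∃ x y, σ x = x ∧ σ y = -y ∧ f (E x) y ≠ 0 := by
    by_contra! hcon
    apply hk'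
    ext v
    rw [LinearMap.zero_apply]
    apply h.nd
    intro w
    obtain ⟨a, b, rfl, h1, h2⟩ := h.half v
    obtain ⟨c, d, rfl, h3, h4⟩ := h.half w
    have e1 : f (E a) c = 0 := h.opp (e := -1) (by ring) (by simp [hsE, h1]) (by simpa)
    have e2 : f (E b) d = 0 := h.opp (e := 1) (by ring) (by simp [hsE, h2]) (by simpa)
    have e3 : f (E b) c = 0 := by rw [skew, h.symm, hcon c b h3 h2, neg_zero]
    simp only [map_add, LinearMap.add_apply]
    rw [e1, e2, e3, hcon a d h1 h4]
    simp
  obtain ⟨x, y, hx, hy, hxy⟩ := hex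
  have hx' : σ x = (1 : K) • x := by simpa
  have hy' : σ y = (-1 : K) • y := by simpa
  have hyx : f (E y) x = - f (E x) y := by rw [skew, h.symm]
  set U := cW φ ψ x ⊔ cW φ ψ y with hUdef
  have sup_inv : ∀ T : Module.End K W, Invt T (cW φ ψ x) → Invt T (cW φ ψ y) → Invt T U := by
    intro T h1 h2 v hv
    obtain ⟨a, ha, b, hb, rfl⟩ := Submodule.mem_sup.1 hv
    rw [map_add]
    exact Submodule.add_mem_sup (h1 a ha) (h2 b hb)
  have hUf := sup_inv φ (h.cW_f x) (h.cW_f y)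
  have hUp := sup_inv ψ (h.cW_p x) (h.cW_p y)
  have hUs := sup_inv σ (h.cW_s hx') (h.cW_s hy')
  have hxU : x ∈ U := Submodule.mem_sup_left (self_mem_cW x)
  have hyU : y ∈ U := Submodule.mem_sup_right (self_mem_cW y)
  have hCU : Submodule.span K {x, y} ≤ U := by
    rw [Submodule.span_le]
    rintro v (rfl | rfl)
    · exact hxU
    · exact hyU
  have hQ := h.invQ hUf hUp hCU
  have hUQ : U ≤ Submodule.span K {x, y} ⊔ U.map (φ - 1) := by
    apply sup_le
    · exact cW_le (Submodule.mem_sup_left (Submodule.subset_span (by simp))) hQ.1 hQ.2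
    · exact cW_le (Submodule.mem_sup_left (Submodule.subset_span (by simp))) hQ.1 hQ.2
  have hcore := core (f := f) h.NM (U := U) (C := Submodule.span K {x, y})
    (fun v hv => Submodule.sub_mem _ (hUp v hv) hv) hUQ hk (by
      intro c hc hv
      obtain ⟨a, b, rfl⟩ := Submodule.mem_span_pair.1 hc
      have h1 := hv y hyU
      have h2 := hv x hxU
      rw [hE] at h1 h2
      simp only [map_add, map_smul, LinearMap.add_apply, LinearMap.smul_apply, smul_eq_mul, alt,
        hyx, mul_zero, add_zero, zero_add, mul_neg, neg_eq_zero] at h1 h2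
      rw [(mul_eq_zero.1 h1).resolve_right hxy, (mul_eq_zero.1 h2).resolve_right hxy]
      simp)
  rw [hE] at hcore
  obtain ⟨hND, hker⟩ := hcore
  have hUtop : U = ⊤ := by
    rcases hirr U hUf hUp hUs hND with h0 | h0
    · exfalso
      rw [h0, Submodule.mem_bot] at hxU
      apply hxy
      rw [hxU, map_zero, map_zero, LinearMap.zero_apply]
    · exact h0
  clear_value U
  subst hUtop
  intro P hPf hPp hP
  by_contra! hcon
  obtain ⟨hP0, hP1⟩ := hcon
  have hPo : ∀ b, b ∈ f.orthogonal P ↔ ∀ u ∈ P, f u b = 0 := fun b => Iff.rfl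
  have hdis : ∀ b ∈ P, b ∈ f.orthogonal P → b = 0 := fun b hb hb' =>
    hP b hb fun y hy => by rw [h.symm]; exact hb' y hy
  have hO0 : f.orthogonal P ≠ ⊥ := by
    intro h0
    apply hP1
    rw [eq_top_iff]
    intro v _
    obtain ⟨a, ha, b, rfl, hb⟩ := nd_split h.symm hP v
    have : b ∈ f.orthogonal P := (hPo b).2 hb
    rw [h0, Submodule.mem_bot] at this
    rw [this, add_zero]; exact ha
  have hOf : Invt φ (f.orthogonal P) := by
    intro b hb
    rw [hPo] at *
    intro u hu
    rw [← h.adj']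
    exact hb _ (hPp u hu)
  obtain ⟨z, hz, hz0, hNz⟩ := ker_exists (invN hPf) hP0 hk
  obtain ⟨z', hz', hz'0, hNz'⟩ := ker_exists (invN hOf) hO0 hk
  obtain ⟨c, hc, hzc⟩ := hker z trivial hNz
  obtain ⟨c', hc', hzc'⟩ := hker z' trivial hNz'
  obtain ⟨u, hu, u', hcu, hu'⟩ := nd_split h.symm hP c
  have hzu : z = E u := by
    rw [← sub_eq_zero]
    apply hdis _ (P.sub_mem hz (hinv P hPf u hu))
    have : z - E u = E u' := by rw [hzc, hcu, map_add]; abel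
    rw [this]
    exact hinv _ hOf u' ((hPo u').2 hu')
  obtain ⟨α, β, rfl⟩ := Submodule.mem_span_pair.1 hc
  obtain ⟨γ, δ, rfl⟩ := Submodule.mem_span_pair.1 hc'
  have q1 : α * f (E x) u + β * f (E y) u = 0 := by
    have := alt u
    rw [← hzu, hzc] at this
    simpa using this
  have q2 : γ * f (E x) u + δ * f (E y) u = 0 := by
    have := hz' u hu
    change f u z' = 0 at this
    rw [h.symm, hzc'] at this
    simpa using this
  have hdet : α * δ - β * γ = 0 := by
    by_contra hd
    have a0 : f (E x) u = 0 := by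
      have : (α * δ - β * γ) * f (E x) u = 0 := by linear_combination δ * q1 - β * q2
      exact (mul_eq_zero.1 this).resolve_left hd
    have b0 : f (E y) u = 0 := by
      have : (α * δ - β * γ) * f (E y) u = 0 := by linear_combination α * q2 - γ * q1
      exact (mul_eq_zero.1 this).resolve_left hd
    apply hz0
    apply h.nd
    intro v
    obtain ⟨g, hg, b, ⟨w, _, rfl⟩, hv⟩ := Submodule.mem_sup.1 (hUQ (Submodule.mem_top (x := v)))
    obtain ⟨s, t, rfl⟩ := Submodule.mem_span_pair.1 hg
    rw [hzu, skew, h.symm, ← hv, map_add, hkN, add_zero]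
    simp [a0, b0]
  have r1 : α • z' = γ • z := by
    rw [hzc, hzc', ← sub_eq_zero]
    have : α • E (γ • x + δ • y) - γ • E (α • x + β • y) = (α * δ - β * γ) • E y := by
      simp only [map_add, map_smul]; module
    rw [this, hdet, zero_smul]
  have r2 : β • z' = δ • z := by
    rw [hzc, hzc', ← sub_eq_zero]
    have : β • E (γ • x + δ • y) - δ • E (α • x + β • y) = -(α * δ - β * γ) • E x := by
      simp only [map_add, map_smul]; module
    rw [this, hdet, neg_zero, zero_smul]
  have α0 : α = 0 := by
    have := hdis (α • z') (by rw [r1]; exact P.smul_mem _ hz) (Submodule.smul_mem _ _ hz')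
    exact (smul_eq_zero.1 this).resolve_right hz'0
  have β0 : β = 0 := by
    have := hdis (β • z') (by rw [r2]; exact P.smul_mem _ hz) (Submodule.smul_mem _ _ hz')
    exact (smul_eq_zero.1 this).resolve_right hz'0
  apply hz0
  rw [hzc, α0, β0]; simp

theorem caseA [FiniteDimensional K W] [Nontrivial W] (h : Setup f φ ψ σ) (hirr : Irr f φ ψ σ)
    (hS : IsNilpotent (φ + ψ - 2)) : PIndec f φ ψ := by
  have hfp : φ * ψ = 1 := LinearMap.ext h.h1
  have hpf : ψ * φ = 1 := LinearMap.ext h.h2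
  have hN : IsNilpotent (φ - 1) := by
    have e : (φ - 1) ^ 2 = φ * (φ + ψ - 2) := by
      rw [mul_sub, mul_add, hfp, pow_two, sub_mul, mul_sub, mul_two]; simp; abel
    have hc : Commute φ (φ + ψ - 2) := by
      show φ * (φ + ψ - 2) = (φ + ψ - 2) * φ
      rw [mul_sub, mul_add, sub_mul, add_mul, hfp, hpf, mul_two, two_mul]
    obtain ⟨n, hn⟩ := hS
    refine ⟨2 * n, ?_⟩
    rw [pow_mul, e, hc.mul_pow, hn, mul_zero]
  obtain ⟨k, hk, hk'⟩ := exists_nil hN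
  rcases Nat.even_or_odd k with he | ho
  · exact h.caseA_even hirr hk hk' he
  · exact h.caseA_odd hirr hk hk' ho

theorem neg (h : Setup f φ ψ σ) : Setup f (-φ) (-ψ) σ where
  two := h.two
  symm := h.symm
  nd := h.nd
  h1 x := by simp [h.h1]
  h2 x := by simp [h.h2]
  adj x y := by simp [h.adj]
  sadj := h.sadj
  ss := h.ss
  sf x := by simp [h.sf]
  sp x := by simp [h.sp]

theorem inv_neg {T : Module.End K W} {U : Submodule K W} : Invt (-T) U ↔ Invt T U := by
  simp [Invt]

theorem main [FiniteDimensional K W] [Nontrivial W] (h : Setup f φ ψ σ) (hirr : Irr f φ ψ σ) :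
    PIndec f φ ψ := by
  by_cases hD : Function.Injective (φ - ψ)
  · exact h.caseB hirr hD
  have fit := fun q : K[X] => h.fitting hirr (aeval_adj h.Sadj q) (aeval_comm h.Scomm q)
    (aeval_comm h.Sf q) (aeval_comm h.Sp q)
  rcases fit (X - C 2) with h1 | h1
  · apply h.caseA hirr
    have e : aeval (φ + ψ) (X - C 2 : K[X]) = φ + ψ - 2 := by
      rw [map_sub, aeval_X, aeval_C, map_ofNat]
    rwa [e] at h1
  rcases fit (X + C 2) with h2 | h2
  · have hirr' : Irr f (-φ) (-ψ) σ := fun U a b c d =>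
      hirr U (inv_neg.1 a) (inv_neg.1 b) c d
    have := h.neg.caseA hirr' (by
      rw [← isNilpotent_neg_iff]
      have e : -(-φ + -ψ - 2) = aeval (φ + ψ) (X + C 2 : K[X]) := by
        rw [map_add, aeval_X, aeval_C, map_ofNat]; abel
      rw [e]; exact h2)
    exact fun U a b d => this U (inv_neg.2 a) (inv_neg.2 b) d
  · exfalso
    apply hD
    have h3 : Function.Injective (aeval (φ + ψ) (X * X - C 4 : K[X])) := by
      have e : (X * X - C 4 : K[X]) = (X - C 2) * (X + C 2) := by
        have : (C 4 : K[X]) = C 2 * C 2 := by rw [← C_mul]; norm_num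
        rw [this]; ring
      rw [e, map_mul]
      exact h1.comp h2
    intro a b hab
    apply h3
    rw [← h.DD, ← h.DD, hab]

end Setup

theorem inv_of [FiniteDimensional K W] (h1 : ∀ x, φ (ψ x) = x) (h2 : ∀ x, ψ (φ x) = x)
    {U : Submodule K W} (hU : Invt φ U) : Invt ψ U := by
  intro u hu
  have hinj : Function.Injective (φ.restrict hU) := by
    intro a b hab
    have : φ a = φ b := congrArg Subtype.val hab
    have := congrArg ψ this
    rw [h2, h2] at this
    exact Subtype.ext this
  obtain ⟨v, hv⟩ := LinearMap.injective_iff_surjective.1 hinj ⟨u, hu⟩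
  have : φ v = u := congrArg Subtype.val hv
  rw [← this, h2]
  exact v.2

theorem Setup.restr (h : Setup f φ ψ σ) {U : Submodule K W} (hf : Invt φ U) (hp : Invt ψ U)
    (hs : Invt σ U) (hU : ND f U) :
    Setup (f.restrict U) (φ.restrict hf) (ψ.restrict hp) (σ.restrict hs) where
  two := h.two
  symm x y := h.symm x y
  nd x hx := Subtype.ext (hU x x.2 fun y hy => hx ⟨y, hy⟩)
  h1 x := Subtype.ext (h.h1 x)
  h2 x := Subtype.ext (h.h2 x)
  adj x y := h.adj x y
  sadj x y := h.sadj x y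
  ss x := Subtype.ext (h.ss x)
  sf x := Subtype.ext (h.sf x)
  sp x := Subtype.ext (h.sp x)

theorem inv_map {T : Module.End K W} {U : Submodule K W} (hU : Invt T U) {P : Submodule K U}
    (hP : Invt (T.restrict hU) P) : Invt T (P.map U.subtype) := by
  rintro _ ⟨x, hx, rfl⟩
  exact ⟨_, hP x hx, rfl⟩

theorem nd_map {U : Submodule K W} {P : Submodule K U} (hP : ND (f.restrict U) P) :
    ND f (P.map U.subtype) := by
  rintro _ ⟨x, hx, rfl⟩ hy
  have := hP x hx fun y hy' => hy y ⟨y, hy', rfl⟩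
  rw [this]; simp

theorem decomp [FiniteDimensional K W] (h : Setup f φ ψ σ) (n : ℕ) :
    ∀ U : Submodule K W, Module.finrank K U ≤ n → Invt φ U → Invt ψ U → Invt σ U → ND f U →
    ∃ (m : ℕ) (F : Fin m → Submodule K W),
      (∀ i j, i ≠ j → ∀ x ∈ F i, ∀ y ∈ F j, f x y = 0) ∧
      (⨆ i, F i) = U ∧
      ∀ i, ∃ hUi : Invt φ (F i),
        Invt σ (F i) ∧ (f.restrict (F i)).Nondegenerate ∧
        OrthIndec (f.restrict (F i)) (φ.restrict hUi) := by
  induction n with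
  | zero =>
    intro U hn _ _ _ _
    have : U = ⊥ := Submodule.finrank_eq_zero.1 (by omega)
    exact ⟨0, Fin.elim0, fun i => i.elim0, by rw [this]; simp, fun i => i.elim0⟩
  | succ n ih =>
    intro U hn hf hp hs hU
    by_cases hU0 : U = ⊥
    · exact ih U (by rw [hU0]; simp) hf hp hs hU
    have : Nontrivial U := Submodule.nontrivial_iff_ne_bot.2 hU0
    have hr := h.restr hf hp hs hU
    by_cases hirr : Irr (f.restrict U) (φ.restrict hf) (ψ.restrict hp) (σ.restrict hs)
    · refine ⟨1, fun _ => U, fun i j hij => absurd (Subsingleton.elim i j) hij, by simp,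
        fun _ => ⟨hf, hs, (nd_iff h.symm U).2 hU, bot_ne_top, ?_⟩⟩
      intro P hP hPn
      exact hr.main hirr P hP (inv_of hr.h1 hr.h2 hP) ((nd_iff hr.symm P).1 hPn)
    · unfold Irr at hirr
      push Not at hirr
      obtain ⟨P, hPf, hPp, hPs, hPn, hP0, hP1⟩ := hirr
      set A := P.map U.subtype with hA
      have hAf := inv_map hf hPf
      have hAp := inv_map hp hPp
      have hAs := inv_map hs hPs
      have hAn := nd_map hPn
      rw [← hA] at hAf hAp hAs hAn
      have hAU : A ≤ U := Submodule.map_subtype_le U P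
      have hA0 : A ≠ ⊥ := by
        intro h0
        apply hP0
        apply Submodule.map_injective_of_injective U.subtype_injective
        rw [← hA, h0, Submodule.map_bot]
      have hAne : A ≠ U := by
        intro h0
        apply hP1
        apply Submodule.map_injective_of_injective U.subtype_injective
        rw [← hA, h0, Submodule.map_subtype_top]
      clear_value A
      have hmem : ∀ b, b ∈ f.orthogonal A ⊓ U ↔ (∀ u ∈ A, f u b = 0) ∧ b ∈ U :=
        fun b => Iff.rfl
      set B := f.orthogonal A ⊓ U with hB
      clear_value B
      have hBU : B ≤ U := fun b hb => ((hmem b).1 hb).2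
      have hAB : A ⊔ B = U := by
        apply le_antisymm (sup_le hAU hBU)
        intro v hv
        obtain ⟨a, ha, b, rfl, hb⟩ := nd_split h.symm hAn v
        refine Submodule.add_mem_sup ha ((hmem b).2 ⟨hb, ?_⟩)
        simpa using U.sub_mem hv (hAU ha)
      have hBf : Invt φ B := fun b hb => (hmem _).2 ⟨fun u hu => by
        rw [← h.adj']; exact ((hmem b).1 hb).1 _ (hAp u hu), hf _ (hBU hb)⟩
      have hBp : Invt ψ B := fun b hb => (hmem _).2 ⟨fun u hu => by
        rw [← h.adj]; exact ((hmem b).1 hb).1 _ (hAf u hu), hp _ (hBU hb)⟩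
      have hBs : Invt σ B := fun b hb => (hmem _).2 ⟨fun u hu => by
        rw [← h.sadj]; exact ((hmem b).1 hb).1 _ (hAs u hu), hs _ (hBU hb)⟩
      have hBn : ND f B := by
        intro b hb hy
        apply hU b (hBU hb)
        intro v hv
        rw [← hAB] at hv
        obtain ⟨a, ha, c, hc, rfl⟩ := Submodule.mem_sup.1 hv
        rw [map_add, hy c hc, h.symm, ((hmem b).1 hb).1 a ha, add_zero]
      have hBne : B ≠ U := by
        intro h0
        apply hA0
        rw [eq_bot_iff]
        intro a ha
        apply hAn a ha
        intro y hy
        have := hAU hy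
        rw [← h0] at this
        exact ((hmem y).1 this).1 a ha
      have l1 := Submodule.finrank_lt_finrank_of_lt (lt_of_le_of_ne hAU hAne)
      have l2 := Submodule.finrank_lt_finrank_of_lt (lt_of_le_of_ne hBU hBne)
      obtain ⟨m1, F1, o1, s1, p1⟩ := ih A (by omega) hAf hAp hAs hAn
      obtain ⟨m2, F2, o2, s2, p2⟩ := ih B (by omega) hBf hBp hBs hBn
      have i1 : ∀ i, F1 i ≤ A := fun i => s1 ▸ le_iSup F1 i
      have i2 : ∀ i, F2 i ≤ B := fun i => s2 ▸ le_iSup F2 i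
      refine ⟨m1 + m2, Fin.append F1 F2, ?_, ?_, ?_⟩
      · intro i j
        refine Fin.addCases (fun i => ?_) (fun i => ?_) i <;>
        refine Fin.addCases (fun j => ?_) (fun j => ?_) j <;>
        intro hij x hx y hy <;>
        simp only [Fin.append_left, Fin.append_right] at hx hy
        · exact o1 i j (fun e => hij (by rw [e])) x hx y hy
        · exact ((hmem y).1 (i2 _ hy)).1 x (i1 _ hx)
        · rw [h.symm]; exact ((hmem x).1 (i2 _ hx)).1 y (i1 _ hy)
        · exact o2 i j (fun e => hij (by rw [e])) x hx y hy
      · apply le_antisymm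
        · apply iSup_le
          intro i
          refine Fin.addCases (fun i => ?_) (fun i => ?_) i
          · rw [Fin.append_left]; exact (i1 i).trans hAU
          · rw [Fin.append_right]; exact (i2 i).trans hBU
        · rw [← hAB, ← s1, ← s2]
          apply sup_le
          · apply iSup_le
            intro i
            rw [← Fin.append_left F1 F2 i]
            exact le_iSup (Fin.append F1 F2) _
          · apply iSup_le
            intro i
            rw [← Fin.append_right F1 F2 i]
            exact le_iSup (Fin.append F1 F2) _
      · intro i
        refine Fin.addCases (fun i => ?_) (fun i => ?_) i
        · rw [Fin.append_left]; exact p1 i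
        · rw [Fin.append_right]; exact p2 i

end Helpers

/-- If `φ ∈ O(V)` is reversed by an involution `σ ∈ O(V)`, then `V` is an
orthogonal sum of `φ`- and `σ`-invariant nondegenerate subspaces on each of which `φ` is
orthogonally indecomposable. -/
theorem stmt12 [FiniteDimensional K V] (hK : ringChar K ≠ 2)
    (f : LinearMap.BilinForm K V) (hsymm : f.IsSymm) (hnd : f.Nondegenerate)
    (φ σ : V ≃ₗ[K] V) (hφ : φ ∈ orthGroup f) (hσ : σ ∈ orthGroup f)
    (hσ2 : σ ^ 2 = 1) (hrev : σ * φ * σ⁻¹ = φ⁻¹) :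
    ∃ (m : ℕ) (U : Fin m → Submodule K V),
      (∀ i j, i ≠ j → ∀ x ∈ U i, ∀ y ∈ U j, f x y = 0) ∧
      (⨆ i, U i) = ⊤ ∧
      ∀ i, ∃ hUi : Invt (φ : V →ₗ[K] V) (U i),
        Invt (σ : V →ₗ[K] V) (U i) ∧ (f.restrict (U i)).Nondegenerate ∧
        OrthIndec (f.restrict (U i)) ((φ : V →ₗ[K] V).restrict hUi) := by
  have hφ' : ∀ x y : V, f (φ x) (φ y) = f x y := hφ
  have hσ' : ∀ x y : V, f (σ x) (σ y) = f x y := hσ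
  have hss : ∀ x, σ (σ x) = x := fun x => by
    have := congrArg (fun g : V ≃ₗ[K] V => g x) hσ2
    simpa [pow_two] using this
  have hr1 : σ * φ = φ⁻¹ * σ := by rw [← hrev]; group
  have hsf : ∀ x, σ (φ x) = φ.symm (σ x) := fun x =>
    congrArg (fun g : V ≃ₗ[K] V => g x) hr1
  have hS : Setup f (φ : V →ₗ[K] V) (φ.symm : V →ₗ[K] V) (σ : V →ₗ[K] V) :=
    { two := Ring.two_ne_zero hK
      symm := hsymm.eq
      nd := hnd.1
      h1 := fun x => φ.apply_symm_apply x
      h2 := fun x => φ.symm_apply_apply x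
      adj := fun x y => by
        have := hφ' x (φ.symm y)
        rw [φ.apply_symm_apply] at this
        exact this
      sadj := fun x y => by
        have := hσ' x (σ y)
        rw [hss] at this
        exact this
      ss := hss
      sf := hsf
      sp := fun x => by
        have := hsf (φ.symm x)
        rw [φ.apply_symm_apply] at this
        show σ (φ.symm x) = φ (σ x)
        rw [this, φ.apply_symm_apply] }
  exact decomp hS _ ⊤ le_rfl (fun _ _ => trivial) (fun _ _ => trivial) (fun _ _ => trivial)
    (fun x _ hx => hnd.1 x fun y => hx y trivial)

end Biref
end

section
/- Let (V, f) be a finite-dimensional nondegenerate symmetric bilinear space over a field K with char K ≠ 2, and let φ ∈ O(V) be orthogonally indecomposable. Then: (1) if V is a direct sum of two cyclic K[x]-submodules (x acting as φ) and φ has exactly two elementary divisors, both equal to (x − 1)^m or both equal to (x + 1)^m, then dim V ≡ 0 (mod 4); (2) dim V is odd if and only if V is indecomposable as a K[x]-module and the minimal polynomial of φ is (x − 1)^{dim V} or (x + 1)^{dim V}. -/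
open Polynomial Module

namespace Biref

variable {K V : Type*} [Field K] [AddCommGroup V] [Module K V]

section Aux

variable {f : LinearMap.BilinForm K V} {ψ N : Module.End K V} {ε : K}

lemma aux_ψN (hN : ∀ x, N x = ψ x - ε • x) (x : V) : ψ (N x) = N (ψ x) := by
  simp [hN]

lemma aux_adj1 (hε : ε * ε = 1) (hψ : ∀ x y, f (ψ x) (ψ y) = f x y)
    (hN : ∀ x, N x = ψ x - ε • x) (x y : V) :
    f (N x) (ψ y) = -ε * f x (N y) := by
  simp only [hN, map_sub, map_smul, LinearMap.sub_apply, LinearMap.smul_apply, smul_eq_mul, hψ]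
  linear_combination (-f x y) * hε

lemma aux_adj (hε : ε * ε = 1) (hψ : ∀ x y, f (ψ x) (ψ y) = f x y)
    (hN : ∀ x, N x = ψ x - ε • x) (k : ℕ) : ∀ (x y : V),
    f ((N ^ k) x) ((ψ ^ k) y) = (-ε) ^ k * f x ((N ^ k) y) := by
  induction k with
  | zero => simp
  | succ k ih =>
    intro x y
    have hc : Commute N ψ := by
      ext z; simpa using (aux_ψN hN z).symm
    have h2 : N ((ψ ^ k) y) = (ψ ^ k) (N y) := by
      have := (hc.pow_right k).eq
      exact congrArg (fun g : Module.End K V => g y) this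
    rw [pow_succ' N k, pow_succ' ψ k, Module.End.mul_apply, Module.End.mul_apply,
      aux_adj1 hε hψ hN, h2, ih, ← pow_succ', pow_succ N k, Module.End.mul_apply, pow_succ]
    ring

lemma aux_sym (hsymm : f.IsSymm) (hε : ε * ε = 1) (hψ : ∀ x y, f (ψ x) (ψ y) = f x y)
    (hN : ∀ x, N x = ψ x - ε • x) (k : ℕ) (hk : N ^ (k + 1) = 0) (x y : V) :
    f ((N ^ k) x) y = (-1) ^ k * f x ((N ^ k) y) := by
  have hz : N ((N ^ k) x) = 0 := by
    rw [← Module.End.mul_apply, ← pow_succ', hk]; rfl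
  have h0 : ψ ((N ^ k) x) = ε • (N ^ k) x := by
    have := hN ((N ^ k) x)
    rw [hz] at this
    exact (sub_eq_zero.mp this.symm)
  have h1 : ∀ y, f ((N ^ k) x) (N y) = 0 := by
    intro y
    have h := aux_adj1 hε hψ hN y ((N ^ k) x)
    rw [h0, hz, map_zero, mul_zero, map_smul, smul_eq_mul] at h
    have hε0 : ε ≠ 0 := by rintro rfl; simp at hε
    rw [hsymm.eq]
    · simpa [hε0] using h
  have h2 : ∀ y, f ((N ^ k) x) (ψ y) = ε * f ((N ^ k) x) y := by
    intro y
    have := h1 y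
    rw [hN, map_sub, map_smul, smul_eq_mul] at this
    linear_combination this
  have h3 : ∀ j y, f ((N ^ k) x) ((ψ ^ j) y) = ε ^ j * f ((N ^ k) x) y := by
    intro j
    induction j with
    | zero => simp
    | succ j ih =>
      intro y
      rw [pow_succ', Module.End.mul_apply, h2, ih]; ring
  have h4 := aux_adj hε hψ hN k x y
  rw [h3] at h4
  have h5 : ε ^ k * ε ^ k = 1 := by rw [← mul_pow, hε, one_pow]
  calc f ((N ^ k) x) y = (ε ^ k * ε ^ k) * f ((N ^ k) x) y := by rw [h5, one_mul]
    _ = ε ^ k * (ε ^ k * f ((N ^ k) x) y) := by ring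
    _ = (ε ^ k * ε ^ k) * ((-1) ^ k * f x ((N ^ k) y)) := by rw [h4, neg_pow]; ring
    _ = _ := by rw [h5, one_mul]

lemma aux_nondeg (hsymm : f.IsSymm) (U : Submodule K V)
    (h : ∀ u ∈ U, (∀ w ∈ U, f u w = 0) → u = 0) : (f.restrict U).Nondegenerate := by
  constructor
  · rintro ⟨u, hu⟩ hx
    have := h u hu (fun w hw => by simpa using hx ⟨w, hw⟩)
    exact Subtype.ext this
  · rintro ⟨u, hu⟩ hx
    have := h u hu (fun w hw => by rw [hsymm.eq]; simpa using hx ⟨w, hw⟩)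
    exact Subtype.ext this

lemma aux_fitting [FiniteDimensional K V] (hsymm : f.IsSymm) (hnd : f.Nondegenerate)
    (hε : ε * ε = 1) (hψ : ∀ x y, f (ψ x) (ψ y) = f x y)
    (hN : ∀ x, N x = ψ x - ε • x) (hoi : OrthIndec f ψ) (hker : LinearMap.ker N ≠ ⊥) :
    ∃ k, N ^ k = 0 := by
  obtain ⟨k, hk⟩ := Filter.eventually_atTop.mp (LinearMap.eventually_isCompl_ker_pow_range_pow N)
  have hk1 := hk (k + 1) (by omega)
  set n := k + 1 with hn
  have hc : Commute N ψ := by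
    ext z; simpa using (aux_ψN hN z).symm
  have hinv : Invt ψ (LinearMap.ker (N ^ n)) := by
    intro x hx
    rw [LinearMap.mem_ker] at hx ⊢
    rw [← Module.End.mul_apply, (hc.pow_left n).eq, Module.End.mul_apply, hx, map_zero]
  have hnd' : (f.restrict (LinearMap.ker (N ^ n))).Nondegenerate := by
    apply aux_nondeg hsymm
    intro u hu hw
    apply hnd.1
    intro y
    have hy : y ∈ LinearMap.ker (N ^ n) ⊔ LinearMap.range (N ^ n) := by
      rw [hk1.sup_eq_top]; trivial
    obtain ⟨a, ha, b, ⟨c, rfl⟩, rfl⟩ := Submodule.mem_sup.mp hy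
    rw [map_add, hw a ha, zero_add]
    have := aux_adj hε hψ hN n u c
    rw [LinearMap.mem_ker.mp hu] at this
    have hε0 : ε ≠ 0 := by rintro rfl; simp at hε
    simpa [hε0] using this
  rcases hoi.2 _ hinv hnd' with h | h
  · exfalso
    apply hker
    rw [eq_bot_iff, ← h]
    intro x hx
    rw [LinearMap.mem_ker] at hx ⊢
    rw [hn, pow_succ, Module.End.mul_apply, hx, map_zero]
  · exact ⟨n, LinearMap.ker_eq_top.mp h⟩

lemma aux_main [FiniteDimensional K V] (hsymm : f.IsSymm)
    (hψ : ∀ x y, f (ψ x) (ψ y) = f x y) (hinj : Function.Injective ψ)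
    (hN : ∀ x, N x = ψ x - ε • x) (hoi : OrthIndec f ψ) (k : ℕ) (hk : N ^ (k + 1) = 0)
    {ι : Type} [Fintype ι] [Nonempty ι] (x : ι → V)
    (hG : ∀ a : ι → K, (∀ l, f (∑ i, a i • (N ^ k) (x i)) (x l) = 0) → a = 0) :
    Module.finrank K V = (k + 1) * Fintype.card ι := by
  classical
  let v : Fin (k + 1) × ι → V := fun p => (N ^ (p.1 : ℕ)) (x p.2)
  let U : Submodule K V := Submodule.span K (Set.range v)
  have hNU : ∀ u ∈ U, N u ∈ U := by
    intro u hu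
    have : U ≤ U.comap N := by
      apply Submodule.span_le.mpr
      rintro _ ⟨⟨j, i⟩, rfl⟩
      change N ((N ^ (j : ℕ)) (x i)) ∈ U
      rw [← Module.End.mul_apply, ← pow_succ']
      by_cases hj : (j : ℕ) + 1 < k + 1
      · exact Submodule.subset_span ⟨(⟨j + 1, hj⟩, i), rfl⟩
      · have : (j : ℕ) + 1 = k + 1 := by omega
        rw [this, hk]; exact U.zero_mem
    exact this hu
  have hinv : Invt ψ U := by
    intro u hu
    have : ψ u = N u + ε • u := by rw [hN]; abel
    rw [this]
    exact U.add_mem (hNU u hu) (U.smul_mem _ hu)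
  have hsurj : ∀ w ∈ U, ∃ w' ∈ U, ψ w' = w := by
    have hle : U.map ψ ≤ U := by
      rintro _ ⟨u, hu, rfl⟩; exact hinv u hu
    have : U.map ψ = U := Submodule.eq_of_le_of_finrank_eq hle
      ((Submodule.equivMapOfInjective ψ hinj U).finrank_eq.symm)
    intro w hw
    rw [← this] at hw
    exact hw
  have hR : ∀ u, (∀ w ∈ U, f u w = 0) → ∀ w ∈ U, f (N u) w = 0 := by
    intro u hu w hw
    obtain ⟨w', hw', rfl⟩ := hsurj w hw
    rw [hN, map_sub, map_smul, LinearMap.sub_apply, LinearMap.smul_apply, hψ, hu _ hw', hu _ hw]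
    simp
  have hRj : ∀ (j : ℕ) u, (∀ w ∈ U, f u w = 0) → ∀ w ∈ U, f ((N ^ j) u) w = 0 := by
    intro j
    induction j with
    | zero => simp
    | succ j ih =>
      intro u hu
      rw [pow_succ, Module.End.mul_apply]
      exact ih _ (hR u hu)
  have hxU : ∀ l, x l ∈ U := fun l => Submodule.subset_span ⟨(0, l), by simp [v]⟩
  have key : ∀ a : Fin (k + 1) × ι → K, (∀ w ∈ U, f (∑ p, a p • v p) w = 0) → a = 0 := by
    intro a ha
    have : ∀ (n : ℕ) (hn : n < k + 1) (i : ι), a (⟨n, hn⟩, i) = 0 := by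
      intro n
      induction n using Nat.strong_induction_on with
      | _ n ih =>
        intro hn
        have h1 := hRj (k - n) _ ha
        have h2 : (N ^ (k - n)) (∑ p, a p • v p)
            = ∑ i, a (⟨n, hn⟩, i) • (N ^ k) (x i) := by
          rw [map_sum, Fintype.sum_prod_type, Finset.sum_eq_single (⟨n, hn⟩ : Fin (k + 1))]
          · apply Finset.sum_congr rfl
            intro i _
            rw [map_smul]
            change _ • (N ^ (k - n)) ((N ^ n) (x i)) = _
            rw [← Module.End.mul_apply, ← pow_add]
            congr 4
            omega
          · rintro ⟨j, hj⟩ _ hne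
            apply Finset.sum_eq_zero
            intro i _
            rcases lt_trichotomy j n with h | h | h
            · rw [ih j h hj i]; simp
            · exact absurd (Fin.ext h) hne
            · rw [map_smul]
              change _ • (N ^ (k - n)) ((N ^ j) (x i)) = _
              rw [← Module.End.mul_apply, ← pow_add]
              have : k - n + j = (k + 1) + (j - n - 1) := by omega
              rw [this, pow_add, hk]; simp
          · simp
        have h3 := hG (fun i => a (⟨n, hn⟩, i)) (fun l => by
          rw [← h2]; exact h1 _ (hxU l))
        exact fun i => congrFun h3 i
    ext ⟨⟨n, hn⟩, i⟩
    exact this n hn i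
  have hli : LinearIndependent K v := by
    rw [Fintype.linearIndependent_iff]
    intro g hg
    have := key g (by rw [hg]; simp)
    intro i; rw [this]; rfl
  have hdim : Module.finrank K U = (k + 1) * Fintype.card ι := by
    rw [finrank_span_eq_card hli]; simp
  have hnd' : (f.restrict U).Nondegenerate := by
    apply aux_nondeg hsymm
    intro u hu hw
    obtain ⟨a, rfl⟩ := (Submodule.mem_span_range_iff_exists_fun K).mp hu
    rw [key a hw]; simp
  rcases hoi.2 U hinv hnd' with h | h
  · rw [h, finrank_bot] at hdim
    have := Fintype.card_pos (α := ι)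
    have : 0 < (k + 1) * Fintype.card ι := by positivity
    omega
  · rw [h, finrank_top] at hdim
    exact hdim

lemma aux_even [FiniteDimensional K V] (h2 : (2 : K) ≠ 0) (hsymm : f.IsSymm)
    (hnd : f.Nondegenerate) (hε : ε * ε = 1)
    (hψ : ∀ x y, f (ψ x) (ψ y) = f x y) (hinj : Function.Injective ψ)
    (hN : ∀ x, N x = ψ x - ε • x) (hoi : OrthIndec f ψ) (k : ℕ) (hk : N ^ (k + 1) = 0)
    (hk' : N ^ k ≠ 0) (hodd : Odd k) : Module.finrank K V = (k + 1) * 2 := by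
  have hex : ∃ x y, f ((N ^ k) x) y ≠ 0 := by
    by_contra! h
    exact hk' (LinearMap.ext fun x => hnd.1 _ (h x))
  obtain ⟨x, y, hxy⟩ := hex
  have hsk : ∀ x y, f ((N ^ k) x) y = - f ((N ^ k) y) x := by
    intro x y
    rw [aux_sym hsymm hε hψ hN k hk, hodd.neg_one_pow, hsymm.eq x]; ring
  have halt : ∀ x, f ((N ^ k) x) x = 0 := by
    intro x
    have := hsk x x
    have h : 2 * f ((N ^ k) x) x = 0 := by linear_combination this
    simpa [h2] using h
  have := aux_main hsymm hψ hinj hN hoi k hk (ι := Fin 2) ![x, y] (by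
    intro a ha
    have h0 := ha 0
    have h1 := ha 1
    simp [Fin.sum_univ_two, halt, hsk y x, hxy] at h0 h1
    ext i; fin_cases i
    · simpa using h1
    · simpa using h0)
  simpa using this

lemma aux_odd [FiniteDimensional K V] (h2 : (2 : K) ≠ 0) (hsymm : f.IsSymm)
    (hnd : f.Nondegenerate) (hε : ε * ε = 1)
    (hψ : ∀ x y, f (ψ x) (ψ y) = f x y) (hinj : Function.Injective ψ)
    (hN : ∀ x, N x = ψ x - ε • x) (hoi : OrthIndec f ψ) (k : ℕ) (hk : N ^ (k + 1) = 0)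
    (hk' : N ^ k ≠ 0) (heven : Even k) : Module.finrank K V = k + 1 := by
  have hex : ∃ x y, f ((N ^ k) x) y ≠ 0 := by
    by_contra! h
    exact hk' (LinearMap.ext fun x => hnd.1 _ (h x))
  have hsk : ∀ x y, f ((N ^ k) x) y = f ((N ^ k) y) x := by
    intro x y
    rw [aux_sym hsymm hε hψ hN k hk, heven.neg_one_pow, hsymm.eq x]; ring
  have hex2 : ∃ x, f ((N ^ k) x) x ≠ 0 := by
    by_contra! h
    obtain ⟨x, y, hxy⟩ := hex
    have h3 := h (x + y)
    simp only [map_add, LinearMap.add_apply, h, hsk y x] at h3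
    apply hxy
    have h : 2 * f ((N ^ k) x) y = 0 := by linear_combination h3
    simpa [h2] using h
  obtain ⟨x, hx⟩ := hex2
  have := aux_main hsymm hψ hinj hN hoi k hk (ι := Fin 1) ![x] (by
    intro a ha
    have h0 := ha 0
    simp [hx] at h0
    ext i; fin_cases i
    simpa using h0)
  simpa using this

lemma aux_pow_finrank [FiniteDimensional K V] (h : IsNilpotent N) :
    N ^ Module.finrank K V = 0 := by
  have := h.charpoly_eq_X_pow_finrank
  have h2 := LinearMap.aeval_self_charpoly N
  rw [this] at h2
  simpa using h2

lemma aux_index (hN0 : ∃ k, N ^ k = 0) (hV : (⊥ : Submodule K V) ≠ ⊤) :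
    ∃ k, N ^ (k + 1) = 0 ∧ N ^ k ≠ 0 := by
  classical
  have hs := Nat.find_spec hN0
  obtain ⟨k, hk⟩ : ∃ k, Nat.find hN0 = k + 1 := by
    apply Nat.exists_eq_succ_of_ne_zero
    intro h0
    rw [h0, pow_zero] at hs
    apply hV
    rw [eq_comm, eq_bot_iff]
    intro x _
    have := congrArg (fun g : Module.End K V => g x) hs
    simpa using this
  exact ⟨k, hk ▸ hs, Nat.find_min hN0 (by omega)⟩

lemma aux_modindec [FiniteDimensional K V] (hV : (⊥ : Submodule K V) ≠ ⊤)
    (hN : ∀ x, N x = ψ x - ε • x) (k : ℕ) (hk : N ^ (k + 1) = 0)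
    (hk' : N ^ k ≠ 0) (hd : Module.finrank K V = k + 1) : ModIndec ψ := by
  refine ⟨hV, ?_⟩
  rintro ⟨A, B, hA, hB, hA0, hB0, hi, hs⟩
  have hC : ∀ C D : Submodule K V, Invt ψ C → D ≠ ⊥ →
      Module.finrank K C + Module.finrank K D = k + 1 → ∀ x ∈ C, (N ^ k) x = 0 := by
    intro C D hC hD hsum x hx
    have hNC : ∀ x ∈ C, N x ∈ C := fun x hx => by
      rw [hN]; exact C.sub_mem (hC x hx) (C.smul_mem _ hx)
    have hnil : IsNilpotent (N.restrict hNC) := by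
      refine ⟨k + 1, ?_⟩
      rw [Module.End.pow_restrict (k + 1) hNC]
      ext y; simp [hk]
    have h0 := aux_pow_finrank hnil
    have hle : Module.finrank K C ≤ k := by
      have : Module.finrank K D ≠ 0 := fun h => hD (Submodule.finrank_eq_zero.mp h)
      omega
    have h1 : (N.restrict hNC) ^ k = 0 := pow_eq_zero_of_le hle h0
    rw [Module.End.pow_restrict k hNC] at h1
    have := congrArg (fun g : Module.End K C => ((g ⟨x, hx⟩ : C) : V)) h1
    simpa using this
  have hsum : Module.finrank K A + Module.finrank K B = k + 1 := by
    rw [← hd, Submodule.finrank_add_eq_of_isCompl (IsCompl.of_eq hi hs)]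
  apply hk'
  ext x
  have hx : x ∈ A ⊔ B := by rw [hs]; trivial
  obtain ⟨a, ha, b, hb, rfl⟩ := Submodule.mem_sup.mp hx
  rw [map_add, hC A B hA hB0 hsum a ha, hC B A hB hA0 (by omega) b hb]
  simp

lemma aux_minpoly [FiniteDimensional K V]
    (hN : N = aeval ψ (X - C ε : K[X])) (k : ℕ) (hk : N ^ (k + 1) = 0)
    (hk' : N ^ k ≠ 0) : minpoly K ψ = (X - C ε) ^ (k + 1) := by
  have h1 : minpoly K ψ ∣ (X - C ε) ^ (k + 1) := minpoly.dvd _ _ (by rw [map_pow, ← hN, hk])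
  obtain ⟨i, hi, hass⟩ := (dvd_prime_pow (prime_X_sub_C ε) _).mp h1
  have h2 : minpoly K ψ = (X - C ε) ^ i :=
    eq_of_monic_of_associated (minpoly.monic (Algebra.IsIntegral.isIntegral ψ))
      ((monic_X_sub_C ε).pow i) hass
  have h3 : N ^ i = 0 := by
    have := minpoly.aeval K ψ
    rwa [h2, map_pow, ← hN] at this
  have : ¬ i ≤ k := fun h => hk' (pow_eq_zero_of_le h h3)
  have : i = k + 1 := by omega
  rw [h2, this]

lemma aux_ker_ge [FiniteDimensional K V] (k : ℕ) (hk : N ^ (k + 1) = 0)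
    (hk' : N ^ k ≠ 0) : k ≤ Module.finrank K (LinearMap.ker (N ^ k)) := by
  have : ∀ j ≤ k, j ≤ Module.finrank K (LinearMap.ker (N ^ j)) := by
    intro j
    induction j with
    | zero => simp
    | succ j ih =>
      intro hj
      have h1 := ih (by omega)
      have hlt : LinearMap.ker (N ^ j) < LinearMap.ker (N ^ (j + 1)) := by
        refine lt_of_le_of_ne ?_ ?_
        · intro x hx
          rw [LinearMap.mem_ker] at hx ⊢
          rw [pow_succ', Module.End.mul_apply, hx, map_zero]
        · intro heq
          have h2 := Module.End.ker_pow_constant heq (k - j)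
          have h3 := Module.End.ker_pow_constant heq (k + 1 - j)
          rw [show j + (k - j) = k by omega] at h2
          rw [show j + (k + 1 - j) = k + 1 by omega, h2, hk] at h3
          exact hk' (LinearMap.ker_eq_top.mp (by rw [h3, LinearMap.ker_zero]))
      have := Submodule.finrank_lt_finrank_of_lt hlt
      omega
  exact this k le_rfl

lemma aux_part1 [FiniteDimensional K V] (h2 : (2 : K) ≠ 0) (hsymm : f.IsSymm)
    (hnd : f.Nondegenerate) (hε : ε * ε = 1)
    (hψ : ∀ x y, f (ψ x) (ψ y) = f x y) (hinj : Function.Injective ψ)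
    (p : K[X]) (hp : p = X - C ε) (hoi : OrthIndec f ψ) (m : ℕ)
    (hm : edMult ψ p m = 2)
    (hd : ∀ d, d ≠ 0 → d ≠ m → edMult ψ p d = 0) : Module.finrank K V % 4 = 0 := by
  set N := aeval ψ p with hNdef
  have hN : ∀ x, N x = ψ x - ε • x := by
    intro x; rw [hNdef, hp]; simp [Module.algebraMap_end_apply]
  have hdeg : p.natDegree = 1 := by rw [hp]; simp
  simp only [edMult, hdeg, Nat.div_one] at hm hd
  set κ : ℕ → ℕ := fun d => Module.finrank K (LinearMap.ker (N ^ d)) with hκ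
  change 2 * κ m - κ (m + 1) - κ (m - 1) = 2 at hm
  change ∀ d, d ≠ 0 → d ≠ m → 2 * κ d - κ (d + 1) - κ (d - 1) = 0 at hd
  have hle : ∀ d, LinearMap.ker (N ^ d) ≤ LinearMap.ker (N ^ (d + 1)) := by
    intro d x hx
    rw [LinearMap.mem_ker] at hx ⊢
    rw [pow_succ', Module.End.mul_apply, hx, map_zero]
  have hmono : ∀ d, κ d ≤ κ (d + 1) := fun d => Submodule.finrank_mono (hle d)
  have hκ0 : κ 0 = 0 := by
    change Module.finrank K (LinearMap.ker (LinearMap.id : V →ₗ[K] V)) = 0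
    rw [LinearMap.ker_id, finrank_bot]
  obtain ⟨k, rfl⟩ : ∃ k, m = k + 1 := by
    apply Nat.exists_eq_succ_of_ne_zero
    rintro rfl
    rw [hκ0] at hm; omega
  rw [Nat.add_sub_cancel] at hm
  have hgrow : ∀ j, κ (k + 2 + j) ≥ κ (k + 1 + j) + (κ (k + 2) - κ (k + 1)) := by
    intro j
    induction j with
    | zero => 
      have h := hmono (k + 1)
      change κ (k + 1) ≤ κ (k + 2) at h
      simp only [Nat.add_zero]; omega
    | succ j ih =>
      have := hd (k + 2 + j) (by omega) (by omega)
      rw [show k + 2 + j - 1 = k + 1 + j by omega] at this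
      rw [show k + 2 + (j + 1) = k + 2 + j + 1 by omega,
        show k + 1 + (j + 1) = k + 2 + j by omega]
      omega
  have hgrow2 : ∀ j, κ (k + 1 + j) ≥ j * (κ (k + 2) - κ (k + 1)) := by
    intro j
    induction j with
    | zero => simp
    | succ j ih =>
      have := hgrow j
      rw [show k + 1 + (j + 1) = k + 2 + j by omega, Nat.succ_mul]
      omega
  have hstab : κ (k + 1) = κ (k + 2) := by
    have h1 := hgrow2 (Module.finrank K V + 1)
    have h3 : κ (k + 1 + (Module.finrank K V + 1)) ≤ Module.finrank K V :=
      Submodule.finrank_le _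
    have h4 := hmono (k + 1)
    by_contra hne
    have h5 : 1 ≤ κ (k + 2) - κ (k + 1) := by
      have : k + 1 + 1 = k + 2 := rfl
      rw [this] at h4
      omega
    have := Nat.mul_le_mul_left (Module.finrank K V + 1) h5
    omega
  have hdiff : κ (k + 1) = κ k + 2 := by
    have : k + 1 + 1 = k + 2 := rfl
    rw [this] at hm; omega
  have hkerne : LinearMap.ker N ≠ ⊥ := by
    intro hbot
    have hz : κ (k + 1) = 0 := by
      simp only [hκ]
      rw [Submodule.finrank_eq_zero, LinearMap.ker_eq_bot, Module.End.coe_pow]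
      exact (LinearMap.ker_eq_bot.mp hbot).iterate _
    omega
  obtain ⟨s, hs⟩ := aux_fitting hsymm hnd hε hψ hN hoi hkerne
  have hkereq : LinearMap.ker (N ^ (k + 1)) = LinearMap.ker (N ^ (k + 1 + 1)) :=
    Submodule.eq_of_le_of_finrank_eq (hle _) hstab
  have hk : N ^ (k + 1) = 0 := by
    have := Module.End.ker_pow_constant hkereq s
    rw [pow_add N (k + 1) s, hs, mul_zero, LinearMap.ker_zero] at this
    exact LinearMap.ker_eq_top.mp this
  have hk' : N ^ k ≠ 0 := by
    intro h0
    have h1 : κ k = κ (k + 1) := by simp only [hκ]; rw [h0, hk]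
    omega
  rcases Nat.even_or_odd k with he | ho
  · exfalso
    have h1 := aux_odd h2 hsymm hnd hε hψ hinj hN hoi k hk hk' he
    have h3 : k ≤ κ k := aux_ker_ge k hk hk'
    have h4 : κ (k + 1) ≤ Module.finrank K V := Submodule.finrank_le _
    omega
  · have h1 := aux_even h2 hsymm hnd hε hψ hinj hN hoi k hk hk' ho
    obtain ⟨t, rfl⟩ := ho
    omega

lemma aux_back [FiniteDimensional K V] (h2 : (2 : K) ≠ 0) (hsymm : f.IsSymm)
    (hnd : f.Nondegenerate) (hε : ε * ε = 1)
    (hψ : ∀ x y, f (ψ x) (ψ y) = f x y) (hinj : Function.Injective ψ)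
    (hoi : OrthIndec f ψ) (hmin : minpoly K ψ = (X - C ε) ^ Module.finrank K V) :
    Odd (Module.finrank K V) := by
  set N := aeval ψ (X - C ε : K[X]) with hNdef
  have hN : ∀ x, N x = ψ x - ε • x := by
    intro x; rw [hNdef]; simp [Module.algebraMap_end_apply]
  have h0 : N ^ Module.finrank K V = 0 := by
    have := minpoly.aeval K ψ
    rwa [hmin, map_pow] at this
  obtain ⟨k, hk, hk'⟩ := aux_index ⟨_, h0⟩ hoi.1
  have h1 := aux_minpoly hNdef k hk hk'
  have h3 : Module.finrank K V = k + 1 := by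
    have := congrArg natDegree (hmin.symm.trans h1)
    simpa using this
  rcases Nat.even_or_odd k with he | ho
  · rw [h3]; exact he.add_one
  · have := aux_even h2 hsymm hnd hε hψ hinj hN hoi k hk hk' ho
    omega

lemma aux_forw [FiniteDimensional K V] (h2 : (2 : K) ≠ 0) (hsymm : f.IsSymm)
    (hnd : f.Nondegenerate) (hε : ε * ε = 1)
    (hψ : ∀ x y, f (ψ x) (ψ y) = f x y) (hinj : Function.Injective ψ)
    (hoi : OrthIndec f ψ) (hodd : Odd (Module.finrank K V))
    (hdet : LinearMap.det (aeval ψ (X - C ε : K[X])) = 0) :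
    ModIndec ψ ∧ minpoly K ψ = (X - C ε) ^ Module.finrank K V := by
  set N := aeval ψ (X - C ε : K[X]) with hNdef
  have hN : ∀ x, N x = ψ x - ε • x := by
    intro x; rw [hNdef]; simp [Module.algebraMap_end_apply]
  have hker : LinearMap.ker N ≠ ⊥ := (LinearMap.bot_lt_ker_of_det_eq_zero hdet).ne'
  obtain ⟨k, hk, hk'⟩ := aux_index (aux_fitting hsymm hnd hε hψ hN hoi hker) hoi.1
  rcases Nat.even_or_odd k with he | ho
  · have h1 := aux_odd h2 hsymm hnd hε hψ hinj hN hoi k hk hk' he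
    exact ⟨aux_modindec hoi.1 hN k hk hk' h1, by rw [h1]; exact aux_minpoly hNdef k hk hk'⟩
  · have h1 := aux_even h2 hsymm hnd hε hψ hinj hN hoi k hk hk' ho
    rw [h1] at hodd
    exact absurd hodd (by simp)

/-- the adjoint has the same determinant -/
lemma aux_det_adj [FiniteDimensional K V] (hnd : f.Nondegenerate) (A B : Module.End K V)
    (h : ∀ x y, f (A x) y = f x (B y)) : LinearMap.det A = LinearMap.det B := by
  let e := LinearMap.BilinForm.toDual f hnd
  have h1 : (Module.Dual.transpose (R := K) B) = (e : V →ₗ[K] Module.Dual K V) ∘ₗ A ∘ₗ (e.symm : _ →ₗ[K] V) := by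
    ext g y
    obtain ⟨x, rfl⟩ := e.surjective g
    simp [e, LinearMap.BilinForm.toDual_def, h, Module.Dual.transpose_apply]
  have h3 := LinearMap.det_conj A e
  rw [← LinearMap.det_dualMap B, ← h3, ← h1]
  rfl

lemma aux_det [FiniteDimensional K V] (h2 : (2 : K) ≠ 0) (hnd : f.Nondegenerate)
    (φ : V ≃ₗ[K] V) (hφ : ∀ x y, f (φ x) (φ y) = f x y) (hodd : Odd (Module.finrank K V)) :
    LinearMap.det (aeval (φ : V →ₗ[K] V) (X - C 1 : K[X])) = 0 ∨
    LinearMap.det (aeval (φ : V →ₗ[K] V) (X - C (-1) : K[X])) = 0 := by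
  set ψ : Module.End K V := (φ : V →ₗ[K] V) with hψ
  set χ : Module.End K V := (φ.symm : V →ₗ[K] V) with hχ
  have hinv : ψ * χ = 1 := by ext x; simp [hψ, hχ]
  have hadj : ∀ x y, f (ψ x) y = f x (χ y) := by
    intro x y
    have := hφ x (φ.symm y)
    rw [φ.apply_symm_apply] at this
    exact this
  have hd1 : LinearMap.det ψ = LinearMap.det χ := aux_det_adj hnd _ _ hadj
  have hd2 : LinearMap.det ψ * LinearMap.det χ = 1 := by rw [← map_mul, hinv, map_one]
  rw [← hd1] at hd2
  have key : ∀ ε : K, ε * ε = 1 → LinearMap.det ψ = ε →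
      LinearMap.det (aeval ψ (X - C ε : K[X])) = 0 := by
    intro ε hε hdet
    set N := aeval ψ (X - C ε : K[X]) with hN
    have hN' : N = ψ - ε • 1 := by
      rw [hN]; ext x; simp [Module.algebraMap_end_apply]
    have hA : LinearMap.det N = LinearMap.det (χ - ε • 1) := by
      apply aux_det_adj hnd
      intro x y
      rw [hN']; simp [hadj]
    have hB : ψ * (χ - ε • 1) = (-ε) • N := by
      rw [hN', mul_sub, hinv, smul_sub, smul_smul, neg_mul, hε, mul_smul_comm, mul_one]
      simp only [neg_smul, one_smul]; abel
    have hC := congrArg LinearMap.det hB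
    rw [map_mul, ← hA, LinearMap.det_smul, hdet, hodd.neg_pow] at hC
    have hp : ε ^ Module.finrank K V = ε := by
      obtain ⟨t, ht⟩ := hodd
      rw [ht, pow_succ, pow_mul, pow_two, hε, one_pow, one_mul]
    rw [hp] at hC
    have h3 : 2 * LinearMap.det N = 0 := by
      linear_combination ε * hC - 2 * LinearMap.det N * hε
    simpa [h2] using h3
  rcases mul_self_eq_one_iff.mp hd2 with h | h
  · exact Or.inl (key 1 (by ring) h)
  · exact Or.inr (key (-1) (by ring) h)

end Aux

/-- Let `φ ∈ O(V)` be orthogonally indecomposable. (1) If `φ` is bicyclic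
with exactly two elementary divisors, both `(x-1)^m` or both `(x+1)^m`, then
`dim V ≡ 0 (mod 4)`. (2) `dim V` is odd iff `V` is an indecomposable `K[x]`-module and the
minimal polynomial of `φ` is `(x-1)^{dim V}` or `(x+1)^{dim V}`. -/
theorem stmt14 [FiniteDimensional K V] (hK : ringChar K ≠ 2)
    (f : LinearMap.BilinForm K V) (hsymm : f.IsSymm) (hnd : f.Nondegenerate)
    (φ : V ≃ₗ[K] V) (hφ : φ ∈ orthGroup f) (hoi : OrthIndec f (φ : V →ₗ[K] V)) :
    ((IsBicyclicEnd (φ : V →ₗ[K] V) ∧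
        ∃ (m : ℕ) (p : K[X]), (p = X - 1 ∨ p = X + 1) ∧
          edMult (φ : V →ₗ[K] V) p m = 2 ∧
          (∀ (r : K[X]) (d : ℕ), r.Monic → Irreducible r → d ≠ 0 →
            ¬(r = p ∧ d = m) → edMult (φ : V →ₗ[K] V) r d = 0)) →
      Module.finrank K V % 4 = 0) ∧
    (Odd (Module.finrank K V) ↔
      (ModIndec (φ : V →ₗ[K] V) ∧
        (minpoly K (φ : V →ₗ[K] V) = (X - 1) ^ Module.finrank K V ∨
          minpoly K (φ : V →ₗ[K] V) = (X + 1) ^ Module.finrank K V))) := by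
  have h2 : (2 : K) ≠ 0 := Ring.two_ne_zero hK
  have hψ : ∀ x y, f ((φ : V →ₗ[K] V) x) ((φ : V →ₗ[K] V) y) = f x y := hφ
  have hinj : Function.Injective (φ : V →ₗ[K] V) := φ.injective
  have e1 : (X - 1 : K[X]) = X - C 1 := by simp
  have e2 : (X + 1 : K[X]) = X - C (-1) := by simp
  refine ⟨?_, ?_, ?_⟩
  · rintro ⟨-, m, p, hp, hm, hall⟩
    have hpε : ∃ ε : K, ε * ε = 1 ∧ p = X - C ε := by
      rcases hp with rfl | rfl
      · exact ⟨1, by ring, e1⟩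
      · exact ⟨-1, by ring, e2⟩
    obtain ⟨ε, hε, hpε⟩ := hpε
    refine aux_part1 h2 hsymm hnd hε hψ hinj p hpε hoi m hm ?_
    intro d hd0 hdm
    refine hall p d ?_ ?_ hd0 (fun h => hdm h.2)
    · rw [hpε]; exact monic_X_sub_C ε
    · rw [hpε]; exact irreducible_X_sub_C ε
  · intro hodd
    rw [e1, e2]
    rcases aux_det h2 hnd φ hφ hodd with h | h
    · have := aux_forw h2 hsymm hnd (by ring) hψ hinj hoi hodd h
      exact ⟨this.1, Or.inl this.2⟩
    · have := aux_forw h2 hsymm hnd (by ring) hψ hinj hoi hodd h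
      exact ⟨this.1, Or.inr this.2⟩
  · rintro ⟨-, h | h⟩
    · rw [e1] at h
      exact aux_back h2 hsymm hnd (by ring) hψ hinj hoi h
    · rw [e2] at h
      exact aux_back h2 hsymm hnd (by ring) hψ hinj hoi h

end Biref
end

section
/- Let K be a finite field of odd characteristic and (V, f) a finite-dimensional nondegenerate symmetric bilinear space over K. Let φ ∈ O(V) be orthogonally indecomposable, with V indecomposable as a K[x]-module (x acting as φ) and with minimal polynomial p^m, where p is monic irreducible, p ≠ x − 1, p ≠ x + 1, and m is odd. Then the Witt index of V equals dim V / 2 − 1. -/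
open Polynomial Module

namespace Biref

variable {K V : Type*} [Field K] [AddCommGroup V] [Module K V]

def TI {K V : Type*} [Field K] [AddCommGroup V] [Module K V]
    (f : LinearMap.BilinForm K V) (W : Submodule K V) : Prop :=
  ∀ x ∈ W, ∀ y ∈ W, f x y = 0

section aux
variable {K V : Type*} [Field K] [AddCommGroup V] [Module K V]

theorem exists_max_TI [FiniteDimensional K V] (f : LinearMap.BilinForm K V) (hr : f.IsRefl) :
    ∃ W : Submodule K V, TI f W ∧ ∀ v, (∀ w ∈ W, f w v = 0) → f v v = 0 → v ∈ W := by
  have hfin : {n | ∃ W : Submodule K V, TI f W ∧ finrank K W = n}.Finite := by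
    refine (Set.finite_Iic (finrank K V)).subset ?_
    rintro n ⟨W, -, rfl⟩
    exact Submodule.finrank_le W
  have hne : {n | ∃ W : Submodule K V, TI f W ∧ finrank K W = n}.Nonempty :=
    ⟨0, ⊥, by intro x hx y hy; simp [(Submodule.mem_bot K).1 hx], by simp⟩
  obtain ⟨n, ⟨W, hW, hn⟩, hmax⟩ := hfin.exists_maximal hne
  refine ⟨W, hW, fun v hv hvv => ?_⟩
  by_contra hvW
  have hlt : W < W ⊔ K ∙ v := by
    refine lt_of_le_of_ne le_sup_left fun h => hvW ?_
    rw [h]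
    exact Submodule.mem_sup_right (Submodule.mem_span_singleton_self v)
  have hTI : TI f (W ⊔ K ∙ v) := by
    intro x hx y hy
    obtain ⟨a, ha, b, hb, rfl⟩ := Submodule.mem_sup.1 hx
    obtain ⟨c, hc, d, hd, rfl⟩ := Submodule.mem_sup.1 hy
    obtain ⟨s, rfl⟩ := Submodule.mem_span_singleton.1 hb
    obtain ⟨t, rfl⟩ := Submodule.mem_span_singleton.1 hd
    simp [hW a ha c hc, hv a ha, hr _ _ (hv c hc), hvv]
  have h1 := Submodule.finrank_lt_finrank_of_lt hlt
  have h2 := hmax ⟨_, hTI, rfl⟩ (by rw [← hn]; exact h1.le)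
  omega

theorem TI_le [FiniteDimensional K V] (f : LinearMap.BilinForm K V) (hnd : f.Nondegenerate)
    (W : Submodule K V) (hW : TI f W) : 2 * finrank K W ≤ finrank K V := by
  have h1 : W ≤ f.orthogonal W := fun x hx y hy => hW y hy x hx
  have h2 := Submodule.finrank_mono h1
  rw [LinearMap.BilinForm.finrank_orthogonal hnd] at h2
  have := Submodule.finrank_le W
  omega

theorem alt_lagr [FiniteDimensional K V] (f : LinearMap.BilinForm K V) (hnd : f.Nondegenerate)
    (ha : f.IsAlt) : ∃ W : Submodule K V, TI f W ∧ finrank K V = 2 * finrank K W := by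
  obtain ⟨W, hW, hm⟩ := exists_max_TI f ha.isRefl
  refine ⟨W, hW, ?_⟩
  have h1 : f.orthogonal W ≤ W := fun x hx => hm x (fun w hw => hx w hw) (ha x)
  have h2 := Submodule.finrank_mono h1
  rw [LinearMap.BilinForm.finrank_orthogonal hnd] at h2
  have := TI_le f hnd W hW
  omega

theorem exists_orth [FiniteDimensional K V] (f : LinearMap.BilinForm K V)
    (C : Submodule K V) (s : Finset V) (h : s.card < finrank K C) :
    ∃ z ∈ C, z ≠ 0 ∧ ∀ x ∈ s, f x z = 0 := by
  let T : C →ₗ[K] (s → K) := LinearMap.pi fun x => (f x.1).comp C.subtype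
  have : LinearMap.ker T ≠ ⊥ := by
    apply LinearMap.ker_ne_bot_of_finrank_lt
    simpa using h
  obtain ⟨z, hz, hz0⟩ := Submodule.exists_mem_ne_zero_of_ne_bot this
  refine ⟨z, z.2, by simpa using hz0, fun x hx => ?_⟩
  exact congrFun (LinearMap.mem_ker.1 hz) ⟨x, hx⟩

theorem exists_iso [Fintype K] (hodd : Odd (Fintype.card K)) [FiniteDimensional K V]
    (f : LinearMap.BilinForm K V) (hs : ∀ x y, f x y = f y x)
    (U : Submodule K V) (h : 3 ≤ finrank K U) : ∃ v ∈ U, v ≠ 0 ∧ f v v = 0 := by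
  classical
  by_contra! hc
  obtain ⟨x, hx, hx0, -⟩ := exists_orth f U ∅ (by simp; omega)
  obtain ⟨y, hy, hy0, hxy⟩ := exists_orth f U {x} (by simp; omega)
  obtain ⟨z, hz, hz0, hxyz⟩ := exists_orth f U {x, y} (lt_of_le_of_lt Finset.card_le_two (by omega))
  have h1 : f x y = 0 := hxy x (by simp)
  have h2 : f x z = 0 := hxyz x (by simp)
  have h3 : f y z = 0 := hxyz y (by simp)
  have hqx := hc x hx hx0
  have hqy := hc y hy hy0
  obtain ⟨a, b, hab⟩ := FiniteField.exists_root_sum_quadratic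
    (f := C (f x x) * X ^ 2 + C 0 * X + C (f z z)) (g := C (f y y) * X ^ 2 + C 0 * X + C 0)
    (degree_quadratic hqx) (degree_quadratic hqy) (Nat.odd_iff.1 hodd)
  simp at hab
  refine hc (a • x + b • y + z) (U.add_mem (U.add_mem (U.smul_mem _ hx) (U.smul_mem _ hy)) hz) ?_ ?_
  · intro h0
    apply hc z hz hz0
    have : f z (a • x + b • y + z) = 0 := by rw [h0]; simp
    simpa [hs z x, hs z y, h2, h3] using this
  · simp [hs z x, hs z y, hs y x, h1, h2, h3]
    linear_combination hab

theorem exists_big_TI [Fintype K] (hodd : Odd (Fintype.card K)) [FiniteDimensional K V]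
    (f : LinearMap.BilinForm K V) (hs : ∀ x y, f x y = f y x) (hnd : f.Nondegenerate) :
    ∃ W : Submodule K V, TI f W ∧ finrank K V ≤ 2 * finrank K W + 2 := by
  have hr : f.IsRefl := fun x y h => by rw [hs, h]
  obtain ⟨W, hW, hm⟩ := exists_max_TI f hr
  refine ⟨W, hW, ?_⟩
  by_contra! hlt
  obtain ⟨W', hc⟩ := Submodule.exists_isCompl W
  have h1 := Submodule.finrank_add_eq_of_isCompl hc
  have h2 := Submodule.finrank_sup_add_finrank_inf_eq W' (f.orthogonal W)
  have h3 := LinearMap.BilinForm.finrank_orthogonal hnd W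
  have h4 := Submodule.finrank_le (W' ⊔ f.orthogonal W)
  obtain ⟨v, hv, hv0, hvv⟩ := exists_iso hodd f hs (W' ⊓ f.orthogonal W) (by omega)
  have := hm v (fun w hw => hv.2 w hw) hvv
  exact hv0 (Submodule.disjoint_def.1 hc.disjoint v this hv.1)

theorem det_swap {n : Type*} [Fintype n] [DecidableEq n] (B C D : Matrix n n K) :
    (Matrix.fromBlocks 0 B C D).det = (-1) ^ Fintype.card n * (B.det * C.det) := by
  have h : Matrix.fromBlocks 0 B C D *
      (Matrix.fromBlocks 1 1 0 1 * Matrix.fromBlocks 1 0 (-1) 1 * Matrix.fromBlocks 1 1 0 1) =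
      Matrix.fromBlocks (-B) 0 (-D) C := by
    simp [Matrix.fromBlocks_multiply]
  have h2 := congrArg Matrix.det h
  simp only [Matrix.det_mul, Matrix.det_fromBlocks_zero₂₁, Matrix.det_fromBlocks_zero₁₂,
    Matrix.det_one, mul_one, Matrix.det_neg] at h2
  rw [h2]; ring

theorem lagr_det [FiniteDimensional K V] (f : LinearMap.BilinForm K V) (hnd : f.Nondegenerate)
    (ε : K) (hs : ∀ x y, f y x = ε * f x y) (W : Submodule K V) (hW : TI f W) (e : ℕ)
    (he : finrank K W = e) (hd : finrank K V = 2 * e) 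
    (b : Basis (Fin e ⊕ Fin e) K V) :
    ∃ c : K, c ≠ 0 ∧
      (LinearMap.BilinForm.toMatrix b f).det = (-1) ^ e * ε ^ e * c ^ 2 := by
  obtain ⟨W', hc⟩ := Submodule.exists_isCompl W
  have h1 := Submodule.finrank_add_eq_of_isCompl hc
  let b1 : Basis (Fin e) K W := Module.finBasisOfFinrankEq K W he
  let b2 : Basis (Fin e) K W' := Module.finBasisOfFinrankEq K W' (by omega)
  let b' : Basis (Fin e ⊕ Fin e) K V :=
    (b1.prod b2).map (Submodule.prodEquivOfIsCompl W W' hc)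
  let B : Matrix (Fin e) (Fin e) K := Matrix.of fun i j => f (b1 i) (b2 j)
  let D : Matrix (Fin e) (Fin e) K := Matrix.of fun i j => f (b2 i) (b2 j)
  have hM : LinearMap.BilinForm.toMatrix b' f = Matrix.fromBlocks 0 B (ε • B.transpose) D := by
    ext i j
    rw [LinearMap.BilinForm.toMatrix_apply]
    rcases i with i | i <;> rcases j with j | j
    · simpa [b'] using hW _ (b1 i).2 _ (b1 j).2
    · simp [b', B]
    · simpa [b', B] using hs _ _
    · simp [b', D]
  have hdet := (LinearMap.BilinForm.nondegenerate_iff_det_ne_zero b).1 hnd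
  have hch := congrArg Matrix.det (LinearMap.BilinForm.toMatrix_mul_basis_toMatrix b' b f)
  have hdD : (LinearMap.BilinForm.toMatrix b' f).det =
      (-1) ^ e * ε ^ e * B.det ^ 2 := by
    rw [hM, det_swap, Matrix.det_smul, Matrix.det_transpose, Fintype.card_fin]; ring
  rw [Matrix.det_mul, Matrix.det_mul, Matrix.det_transpose, hdD] at hch
  have hfin : (LinearMap.BilinForm.toMatrix b f).det =
      (-1) ^ e * ε ^ e * (B.det * (b'.toMatrix b).det) ^ 2 := by
    rw [← hch]; ring
  refine ⟨_, ?_, hfin⟩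
  intro h0
  rw [h0] at hfin
  exact hdet (by rw [hfin]; simp)

end aux


theorem pow_mod_four (t i : ℕ) : ∃ k, (2 * t + 1) ^ i = 2 * (t * i + 2 * k) + 1 := by
  induction i with
  | zero => exact ⟨0, by simp⟩
  | succ n ih =>
    obtain ⟨k, hk⟩ := ih
    exact ⟨2 * t * k + k + t * t * n, by rw [pow_succ, hk]; ring⟩

theorem field_nonsquare {K : Type*} [Field K] [Fintype K] (hodd : Odd (Fintype.card K))
    (p : K[X]) (hp : p.Monic) (hirr : Irreducible p)
    (hp1 : p ≠ X - 1) (hp2 : p ≠ X + 1) (hp0 : p.eval 0 ≠ 0)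
    (hinv : ∃ a : K[X], p ∣ p.comp a ∧ p ∣ a * X - 1) :
    ∃ e, p.natDegree = 2 * e ∧
      ¬ IsSquare ((-1) ^ e * (p.eval 1 * p.eval (-1) * p.eval 0)) := by
  classical
  have : Fact (Irreducible p) := ⟨hirr⟩
  let L := AdjoinRoot p
  let α : L := AdjoinRoot.root p
  let pb := AdjoinRoot.powerBasis hirr.ne_zero
  have : FiniteDimensional K L := pb.finite
  have : Finite L := Module.finite_of_finite K
  have hfr : finrank K L = p.natDegree := by rw [pb.finrank]; simp [pb]
  obtain ⟨a, ha1, ha2⟩ := hinv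
  have hmk : ∀ g : K[X], p ∣ g ↔ aeval α g = 0 := by
    intro g
    rw [AdjoinRoot.aeval_eq, AdjoinRoot.mk_eq_zero]
  have hβ : aeval α a * α = 1 := by
    have := (hmk _).1 ha2
    simpa [sub_eq_zero] using this
  have hα0 : α ≠ 0 := by rintro h; simp [h] at hβ
  have hβ' : aeval α a = α⁻¹ := eq_inv_of_mul_eq_one_left hβ
  have hroot : aeval α⁻¹ p = 0 := by
    have := (hmk _).1 ha1
    rwa [aeval_comp, hβ'] at this
  have hne1 : ∀ c : K, p ≠ X - C c → α ≠ algebraMap K L c := by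
    intro c hc h
    have h1 : p ∣ X - C c := by rw [hmk]; simp [h]
    have h2 := (hirr.dvd_irreducible_iff_associated (irreducible_X_sub_C c)).1 h1
    exact hc (eq_of_monic_of_associated hp (monic_X_sub_C c) h2)
  have hα1 : α ≠ 1 := by simpa using hne1 1 (by simpa using hp1)
  have hαm1 : α ≠ -1 := by simpa using hne1 (-1) (by simpa using hp2)
  let σ : L →ₐ[K] L := AdjoinRoot.liftAlgHom p (Algebra.ofId K L) α⁻¹ (by
    simpa [aeval_def] using hroot)
  have hσ : σ α = α⁻¹ := AdjoinRoot.liftAlgHom_root ..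
  obtain ⟨⟨i, hi⟩, hσi⟩ := (FiniteField.bijective_frobeniusAlgHom_pow K L).2 σ
  simp only at hσi
  have hσσ : σ ^ 2 = 1 := by
    apply AdjoinRoot.algHom_ext
    show σ (σ α) = α
    rw [hσ, map_inv₀, hσ, inv_inv]
  have hdvd : finrank K L ∣ i * 2 := by
    rw [← FiniteField.orderOf_frobeniusAlgHom K L]
    apply orderOf_dvd_of_pow_eq_one
    rw [pow_mul, hσi, hσσ]
  have hi0 : i ≠ 0 := by
    rintro rfl
    rw [pow_zero] at hσi
    have : α = α⁻¹ := by rw [← hσ, ← hσi]; rfl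
    have h2 : α * α = 1 := by nth_rewrite 2 [this]; exact mul_inv_cancel₀ hα0
    rcases mul_self_eq_one_iff.1 h2 with h | h
    · exact hα1 h
    · exact hαm1 h
  have h2i : finrank K L = 2 * i := by
    obtain ⟨k, hk⟩ := hdvd
    have : k < 2 := by by_contra! h; nlinarith
    interval_cases k <;> omega
  refine ⟨i, by omega, ?_⟩
  have hnorm : ∀ c : K, Algebra.norm K (algebraMap K L c - α) = p.eval c := by
    intro c
    have h := charpoly_leftMulMatrix pb
    rw [show pb.gen = α from AdjoinRoot.powerBasis_gen _] at h
    rw [AdjoinRoot.minpoly_root hirr.ne_zero, hp.leadingCoeff] at h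
    simp only [inv_one, map_one, mul_one] at h
    refine Eq.trans ?_ (congrArg (eval c) h)
    rw [Matrix.eval_charpoly, Algebra.norm_eq_matrix_det pb.basis, map_sub]
    congr 2
    rw [AlgHom.commutes]; rfl
  set δ : L := α - α⁻¹ with hδ
  have hδ0 : δ ≠ 0 := by
    intro h
    have h2 : α * α = 1 := by
      rw [hδ, sub_eq_zero] at h
      nth_rewrite 2 [h]; exact mul_inv_cancel₀ hα0
    rcases mul_self_eq_one_iff.1 h2 with h | h
    · exact hα1 h
    · exact hαm1 h
  have hσδ : δ ^ (Fintype.card K ^ i) = - δ := by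
    have h1 : σ δ = -δ := by rw [hδ, map_sub, map_inv₀, hσ, inv_inv]; ring
    rw [← h1, ← hσi]
    rw [AlgHom.coe_pow, FiniteField.coe_frobeniusAlgHom, pow_iterate]
  have hN : p.eval 1 * p.eval (-1) = p.eval 0 * Algebra.norm K δ := by
    have hev : Algebra.norm K (-1 : L) = 1 := by
      have := Algebra.norm_algebraMap (S := L) (-1 : K)
      rw [h2i] at this
      simpa using this
    rw [← hnorm, ← hnorm, ← hnorm, ← map_mul, ← map_mul]
    rw [← one_mul (Algebra.norm K (_ * δ)), ← hev, ← map_mul]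
    congr 1
    have h3 : α * α⁻¹ = 1 := mul_inv_cancel₀ hα0
    simp only [hev, map_one, map_neg, map_zero, hδ]
    linear_combination h3
  rintro ⟨c, hc⟩
  obtain ⟨t, ht⟩ := hodd
  have h4 : ∃ k, (2 * t + 1) ^ i = 2 * (t * i + 2 * k) + 1 := pow_mod_four t i
  obtain ⟨k, hk⟩ := h4
  set s := c / p.eval 0 with hs
  have hs2 : s ^ 2 = (-1) ^ i * Algebra.norm K δ := by
    rw [hs, div_pow, div_eq_iff (pow_ne_zero 2 hp0), pow_two c, ← hc, hN]; ring
  have hs0 : s ≠ 0 := by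
    intro h
    rw [h] at hs2
    have : Algebra.norm K δ ≠ 0 := Algebra.norm_ne_zero_iff.2 hδ0
    have h5 : (-1 : K) ^ i ≠ 0 := pow_ne_zero _ (by simp)
    exact mul_ne_zero h5 this (by rw [← hs2]; simp)
  have h6 : ((-1) ^ i * Algebra.norm K δ) ^ t = 1 := by
    rw [← hs2, ← pow_mul]
    have := FiniteField.pow_card_sub_one_eq_one s hs0
    rwa [ht, Nat.add_sub_cancel] at this
  have h7 := congrArg (algebraMap K L) h6
  have hexp : (Nat.card L - 1) / (Nat.card K - 1) * t =
      ((2 * t + 1) ^ i - 1) * (t * i + 2 * k + 1) := by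
    have hcL : Nat.card L = (2 * t + 1) ^ (2 * i) := by
      rw [Module.natCard_eq_pow_finrank (K := K), h2i, Nat.card_eq_fintype_card, ht]
    have hcK : Nat.card K = 2 * t + 1 := by rw [Nat.card_eq_fintype_card, ht]
    have ht0 : 0 < t := by
      have := Fintype.one_lt_card (α := K)
      omega
    have hdv : (2 * t) ∣ Nat.card L - 1 := by
      have := Nat.sub_dvd_pow_sub_pow (2 * t + 1) 1 (2 * i)
      rw [hcL]; simpa using this
    obtain ⟨w, hw⟩ := hdv
    rw [hcK, Nat.add_sub_cancel, hw, Nat.mul_div_cancel_left _ (by omega)]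
    rw [hcL, mul_comm 2 i, pow_mul, hk] at hw
    rw [hk, Nat.add_sub_cancel]
    have : (2 * (t * i + 2 * k) + 1) ^ 2 - 1 =
      2 * (2 * (t * i + 2 * k) * (t * i + 2 * k + 1)) := by
      rw [Nat.sub_eq_iff_eq_add (Nat.one_le_pow _ _ (by omega))]; ring
    rw [this] at hw
    have : 2 * (w * t) = 2 * (2 * (t * i + 2 * k) * (t * i + 2 * k + 1)) := by rw [hw]; ring
    omega
  have hδp : δ ^ ((2 * t + 1) ^ i - 1) = -1 := by
    rw [ht] at hσδ
    have h8 : δ ^ ((2 * t + 1) ^ i - 1) * δ = -1 * δ := by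
      rw [← pow_succ, Nat.sub_add_cancel (Nat.one_le_pow _ _ (by omega)), hσδ]; ring
    exact mul_right_cancel₀ hδ0 h8
  rw [map_pow, map_mul, FiniteField.algebraMap_norm_eq_pow, mul_pow, ← pow_mul, hexp, pow_mul δ,
    hδp, map_pow, map_neg, map_one, ← pow_mul, ← pow_add,
    show i * t + (t * i + 2 * k + 1) = 2 * (t * i + k) + 1 by ring, pow_add, pow_mul] at h7
  simp only [even_two, Even.neg_pow, one_pow, pow_one, one_mul] at h7
  have h2K : (2 : K) ≠ 0 := by
    intro h
    have h9 : (Fintype.card K : K) = 0 := FiniteField.cast_card_eq_zero K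
    rw [ht] at h9
    push_cast at h9
    rw [h] at h9
    simp at h9
  apply h2K
  have h10 : (-1 : K) = 1 := by
    apply (algebraMap K L).injective
    simpa using h7
  linear_combination -h10


theorem indec_R {K V : Type*} [Field K] [AddCommGroup V] [Module K V] (ψ : Module.End K V)
    (hmi : ModIndec ψ) {Q : Type*} [AddCommGroup Q] [Module K[X] Q]
    (s : Q →ₗ[K[X]] AEval' ψ) (t : AEval' ψ →ₗ[K[X]] Q) (hst : ∀ y, t (s y) = y)
    (hQ : ∃ y : Q, y ≠ 0) : Function.Injective t := by
  let S : Submodule K[X] (AEval' ψ) → Submodule K V := fun N =>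
    (N.restrictScalars K).comap (AEval'.of ψ : V →ₗ[K] AEval' ψ)
  have hS : ∀ N x, x ∈ S N ↔ AEval'.of ψ x ∈ N := fun N x => Iff.rfl
  have hI : ∀ N, Invt ψ (S N) := by
    intro N x hx
    rw [hS] at hx ⊢
    rw [← AEval'.X_smul_of]
    exact N.smul_mem _ hx
  by_contra hinj
  apply hmi.2
  refine ⟨S (LinearMap.range s), S (LinearMap.ker t), hI _, hI _, ?_, ?_, ?_, ?_⟩
  · obtain ⟨y, hy⟩ := hQ
    intro h
    have h1 : (AEval'.of ψ).symm (s y) ∈ S (LinearMap.range s) := by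
      rw [hS]; simp
    rw [h, Submodule.mem_bot] at h1
    have h2 : s y = 0 := by simpa using h1
    apply hy; rw [← hst y, h2, map_zero]
  · intro h
    apply hinj
    rw [← LinearMap.ker_eq_bot, Submodule.eq_bot_iff]
    intro x hx
    have h1 : (AEval'.of ψ).symm x ∈ S (LinearMap.ker t) := by
      rw [hS]; simpa using hx
    rw [h, Submodule.mem_bot] at h1
    simpa using h1
  · rw [Submodule.eq_bot_iff]
    rintro x ⟨h1, h2⟩
    obtain ⟨y, hy⟩ := (hS _ _).1 h1
    have h3 : t (AEval'.of ψ x) = 0 := (hS _ _).1 h2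
    rw [← hy, hst] at h3
    rw [h3, map_zero] at hy
    simpa using hy.symm
  · rw [eq_top_iff]
    intro x _
    rw [Submodule.mem_sup]
    refine ⟨(AEval'.of ψ).symm (s (t (AEval'.of ψ x))), ?_,
      x - (AEval'.of ψ).symm (s (t (AEval'.of ψ x))), ?_, by abel⟩
    · rw [hS]; simp
    · rw [hS]; simp [hst]

theorem finrank_of_indec {K V : Type*} [Field K] [AddCommGroup V] [Module K V]
    [FiniteDimensional K V] (ψ : Module.End K V)
    (hmi : ModIndec ψ) (p : K[X]) (hp : p.Monic) (hirr : Irreducible p) (m : ℕ)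
    (hmin : minpoly K ψ = p ^ m) : finrank K V = m * p.natDegree := by
  classical
  have hkill : ∀ (g : K[X]), (∀ x : AEval' ψ, g • x = 0) ↔ p ^ m ∣ g := by
    intro g
    rw [← hmin, minpoly.dvd_iff]
    constructor
    · intro h
      ext v
      have := h (AEval'.of ψ v)
      rw [← AEval.of_aeval_smul] at this
      simpa using this
    · intro h x
      obtain ⟨v, rfl⟩ := (AEval'.of ψ).surjective x
      rw [← AEval.of_aeval_smul, h]
      simp
  have htor : Module.IsTorsion' (AEval' ψ) (Submonoid.powers p) := by
    intro x
    exact ⟨⟨p ^ m, m, rfl⟩, (hkill (p ^ m)).2 dvd_rfl x⟩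
  obtain ⟨d, k, ⟨e⟩⟩ := Module.torsion_by_prime_power_decomposition hirr htor
  have hex : ∃ x : AEval' ψ, x ≠ 0 := by
    by_contra! h
    apply hmi.1
    symm
    rw [Submodule.eq_bot_iff]
    intro x _
    simpa using h (AEval'.of ψ x)
  obtain ⟨x, hx⟩ := hex
  have hi : ∃ i, e x i ≠ 0 := by
    by_contra! h
    apply hx
    apply e.injective
    rw [map_zero]
    ext i
    exact h i
  obtain ⟨i, hi⟩ := hi
  let t : AEval' ψ →ₗ[K[X]] (K[X] ⧸ K[X] ∙ p ^ k i) :=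
    (DirectSum.component K[X] (Fin d) (fun i => K[X] ⧸ K[X] ∙ p ^ k i) i).comp e.toLinearMap
  let s : (K[X] ⧸ K[X] ∙ p ^ k i) →ₗ[K[X]] AEval' ψ :=
    e.symm.toLinearMap.comp (DirectSum.lof K[X] (Fin d) (fun i => K[X] ⧸ K[X] ∙ p ^ k i) i)
  have hst : ∀ y, t (s y) = y := by
    intro y
    simp [t, s, DirectSum.component.lof_self]
  have hinj := indec_R ψ hmi s t hst ⟨_, hi⟩
  let E : AEval' ψ ≃ₗ[K[X]] (K[X] ⧸ K[X] ∙ p ^ k i) :=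
    LinearEquiv.ofBijective t ⟨hinj, fun y => ⟨_, hst y⟩⟩
  have hmk : p ^ m ∣ p ^ k i := by
    rw [← hkill]
    intro x
    apply E.injective
    rw [map_smul, map_zero]
    obtain ⟨y, hy⟩ := Submodule.Quotient.mk_surjective _ (E x)
    rw [← hy, ← Submodule.Quotient.mk_smul, Submodule.Quotient.mk_eq_zero,
      Submodule.mem_span_singleton]
    exact ⟨y, by simp [mul_comm]⟩
  have hkm : p ^ k i ∣ p ^ m := by
    have h := (hkill (p ^ m)).2 dvd_rfl (E.symm (Submodule.Quotient.mk 1))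
    have h2 := congrArg E h
    rw [map_smul, map_zero, LinearEquiv.apply_symm_apply, ← Submodule.Quotient.mk_smul,
      Submodule.Quotient.mk_eq_zero, Submodule.mem_span_singleton] at h2
    obtain ⟨c, hc⟩ := h2
    exact ⟨c, by simpa [mul_comm] using hc.symm⟩
  have heq : p ^ m = p ^ k i :=
    eq_of_monic_of_associated (hp.pow _) (hp.pow _) (associated_of_dvd_dvd hmk hkm)
  have h1 : finrank K V = finrank K (AEval' ψ) := (AEval'.of ψ).finrank_eq
  have h2 : finrank K (AEval' ψ) = finrank K (K[X] ⧸ K[X] ∙ p ^ k i) :=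
    (E.restrictScalars K).finrank_eq
  have h3 : finrank K (K[X] ⧸ K[X] ∙ p ^ k i) = (p ^ k i).natDegree :=
    finrank_quotient_span_eq_natDegree
  rw [h1, h2, h3, ← heq, natDegree_pow]

theorem adj_aeval {K V : Type*} [Field K] [AddCommGroup V] [Module K V]
    (f : LinearMap.BilinForm K V) (a b : Module.End K V) (h : ∀ x y, f (a x) y = f x (b y))
    (g : K[X]) : ∀ x y, f (aeval a g x) y = f x (aeval b g y) := by
  have hpow : ∀ (n : ℕ) x y, f ((a ^ n) x) y = f x ((b ^ n) y) := by
    intro n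
    induction n with
    | zero => simp
    | succ n ih =>
      intro x y
      rw [pow_succ, pow_succ', Module.End.mul_apply, Module.End.mul_apply, ih, h]
  induction g using Polynomial.induction_on' with
  | add p q hp hq => intro x y; simp [hp, hq]
  | monomial n c => intro x y; simp [aeval_monomial, hpow, Module.algebraMap_end_apply]

theorem key {K V : Type*} [Field K] [AddCommGroup V] [Module K V]
    [Fintype K] (hodd : Odd (Fintype.card K)) [FiniteDimensional K V]
    (f : LinearMap.BilinForm K V) (hsymm : f.IsSymm) (hnd : f.Nondegenerate)
    (φ : V ≃ₗ[K] V) (hφ : φ ∈ orthGroup f)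
    (hmi : ModIndec (φ : V →ₗ[K] V))
    (p : K[X]) (m : ℕ) (hp : p.Monic) (hirr : Irreducible p)
    (hp1 : p ≠ X - 1) (hp2 : p ≠ X + 1) (hm : Odd m)
    (hmin : minpoly K (φ : V →ₗ[K] V) = p ^ m) :
    ∃ E, finrank K V = 2 * E ∧ ∀ W : Submodule K V, TI f W → finrank K W ≠ E := by
  have hs : ∀ x y, f x y = f y x := fun x y => by simpa using hsymm.eq x y
  have hφ' : ∀ x y, f (φ x) (φ y) = f x y := hφ
  set ψ : Module.End K V := (φ : V →ₗ[K] V) with hψ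
  set χ : Module.End K V := (φ.symm : V →ₗ[K] V) with hχ
  have hψχ : ψ * χ = 1 := by ext v; simp [hψ, hχ]
  have hχψ : χ * ψ = 1 := by ext v; simp [hψ, hχ]
  have hadj : ∀ x y, f (ψ x) y = f x (χ y) := by
    intro x y
    have := hφ' x (φ.symm y)
    simpa [hψ, hχ] using this
  have hm0 : m ≠ 0 := by rintro rfl; simp at hm
  have hn := finrank_of_indec ψ hmi p hp hirr m hmin
  have hchar : ψ.charpoly = p ^ m := by
    refine eq_of_monic_of_dvd_of_natDegree_le (hp.pow m) ψ.charpoly_monic ?_ ?_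
    · rw [← hmin]; exact ψ.minpoly_dvd_charpoly
    · rw [ψ.charpoly_natDegree, hn, natDegree_pow]
  have hev : ∀ c : K, p.eval c ^ m = LinearMap.det (algebraMap K (Module.End K V) c - ψ) := by
    intro c; rw [← LinearMap.eval_charpoly, hchar, eval_pow]
  have hroot : ∀ c : K, p ≠ X - C c → p.eval c ≠ 0 := by
    intro c hc h
    have h1 : X - C c ∣ p := dvd_iff_isRoot.2 h
    have h2 := ((irreducible_X_sub_C c).dvd_irreducible_iff_associated hirr).1 h1
    exact hc (eq_of_monic_of_associated (monic_X_sub_C c) hp h2).symm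
  have h1 : p.eval 1 ≠ 0 := hroot 1 (by simpa using hp1)
  have hm1 : p.eval (-1) ≠ 0 := hroot (-1) (by simpa using hp2)
  have hdetψ : LinearMap.det ψ ≠ 0 := by
    intro h
    have := congrArg LinearMap.det hψχ
    rw [map_mul, h] at this
    simp at this
  have hdneg : p.eval 0 ^ m = (-1) ^ finrank K V * LinearMap.det ψ := by
    rw [hev, ← LinearMap.det_smul]
    congr 1
    simp
  have hp0 : p.eval 0 ≠ 0 := by
    intro h
    rw [h, zero_pow hm0] at hdneg
    exact mul_ne_zero (pow_ne_zero _ (by simp)) hdetψ hdneg.symm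
  have hinv : ∃ a : K[X], p ∣ p.comp a ∧ p ∣ a * X - 1 := by
    have hcop : IsCoprime (X : K[X]) (p ^ m) := by
      apply IsCoprime.pow_right
      rw [(irreducible_X (R := K)).coprime_iff_not_dvd, X_dvd_iff, coeff_zero_eq_eval_zero]
      exact hp0
    obtain ⟨a, b, hab⟩ := hcop
    refine ⟨a, ?_, ?_⟩
    · have haψ : aeval ψ a = χ := by
        have h := congrArg (aeval ψ) hab
        rw [map_add, map_mul, map_mul, ← hmin, minpoly.aeval, mul_zero, add_zero, aeval_X,
          map_one] at h
        calc aeval ψ a = aeval ψ a * (ψ * χ) := by rw [hψχ, mul_one]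
          _ = χ := by rw [← mul_assoc, h, one_mul]
      have hz : aeval χ (p ^ m) = 0 := by
        ext y
        apply hnd.2
        intro x
        rw [← adj_aeval f ψ χ hadj, ← hmin, minpoly.aeval]
        simp
      have hd : p ^ m ∣ (p ^ m).comp a := by
        rw [← hmin, minpoly.dvd_iff, aeval_comp, haψ, hmin, hz]
      rw [pow_comp] at hd
      exact hirr.prime.dvd_of_dvd_pow ((dvd_pow_self p hm0).trans hd)
    · have : a * X - 1 = p ^ m * (-b) := by linear_combination hab
      rw [this]
      exact (dvd_pow_self p hm0).mul_right _
  obtain ⟨e, he, hnsq⟩ := field_nonsquare hodd p hp hirr hp1 hp2 hp0 hinv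
  have hE : finrank K V = 2 * (m * e) := by rw [hn, he]; ring
  refine ⟨m * e, hE, ?_⟩
  intro W hW hWE
  set T : Module.End K V := ψ - χ with hT
  have hdetT : LinearMap.det T * p.eval 0 ^ m = (p.eval 1 * p.eval (-1)) ^ m := by
    rw [mul_pow, hev 1, hev (-1), hdneg, hE, pow_mul, neg_one_sq, one_pow, one_mul, ← map_mul,
      ← map_mul]
    congr 1
    rw [hT, sub_mul, hχψ, map_one, map_neg, map_one]
    noncomm_ring
  have hT0 : LinearMap.det T ≠ 0 := by
    intro h
    rw [h, zero_mul] at hdetT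
    exact pow_ne_zero _ (mul_ne_zero h1 hm1) hdetT.symm
  let g : LinearMap.BilinForm K V := f.compLeft T
  have hg : ∀ x y, g x y = f (ψ x) y - f (χ x) y := by
    intro x y
    simp [g, hT]
  have hadj2 : ∀ x y, f (χ x) y = f x (ψ y) := by
    intro x y; rw [hs, ← hadj, hs]
  have hskew : ∀ x y, g y x = -1 * g x y := by
    intro x y
    rw [hg, hg, hadj2 y x, hs y, hadj y x, hs y]; ring
  have halt : g.IsAlt := by
    intro x
    rw [hg, hadj2, hs]; ring
  let b : Basis (Fin (m * e) ⊕ Fin (m * e)) K V :=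
    (Module.finBasisOfFinrankEq K V (hE.trans (two_mul _))).reindex finSumFinEquiv.symm
  have hdf := (LinearMap.BilinForm.nondegenerate_iff_det_ne_zero b).1 hnd
  have hdg : (LinearMap.BilinForm.toMatrix b g).det =
      LinearMap.det T * (LinearMap.BilinForm.toMatrix b f).det := by
    rw [LinearMap.BilinForm.toMatrix_compLeft, Matrix.det_mul, Matrix.det_transpose,
      LinearMap.det_toMatrix]
  have hgnd : g.Nondegenerate := by
    rw [LinearMap.BilinForm.nondegenerate_iff_det_ne_zero b, hdg]
    exact mul_ne_zero hT0 hdf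
  obtain ⟨W', hW', hWd⟩ := alt_lagr g hgnd halt
  obtain ⟨c1, hc1, e1⟩ := lagr_det f hnd 1 (fun x y => by rw [hs]; ring) W hW _ hWE hE b
  obtain ⟨c2, hc2, e2⟩ := lagr_det g hgnd (-1) hskew W' hW' (m * e) (by omega) hE b
  rw [hdg, e1, one_pow, ← mul_pow] at e2
  simp only [mul_one, mul_neg, neg_neg, one_pow, one_mul] at e2
  set z : K := (-1) ^ e * (p.eval 1 * p.eval (-1) * p.eval 0) with hz
  have hz0 : z ≠ 0 :=
    mul_ne_zero (pow_ne_zero _ (by simp)) (mul_ne_zero (mul_ne_zero h1 hm1) hp0)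
  have hzm : z ^ m = (c2 / c1 * p.eval 0 ^ m) ^ 2 := by
    have h5 : (c2 / c1) ^ 2 = LinearMap.det T * (-1) ^ (m * e) := by
      rw [div_pow, div_eq_iff (pow_ne_zero 2 hc1), ← e2]; ring
    rw [mul_pow (c2 / c1), h5, hz, mul_pow, mul_pow _ (p.eval 0), ← hdetT, ← pow_mul, mul_comm e m]
    ring
  apply hnsq
  obtain ⟨k, hk⟩ := hm
  refine ⟨(c2 / c1 * p.eval 0 ^ m) / z ^ k, ?_⟩
  rw [← pow_two, div_pow, ← hzm, eq_div_iff (pow_ne_zero _ (pow_ne_zero _ hz0)), hk]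
  ring

/-- Over a finite field of odd characteristic, an orthogonally
indecomposable `φ ∈ O(V)` of type 2o (indecomposable as `K[x]`-module, minimal polynomial
`p^m` with `p ≠ x ± 1` irreducible and `m` odd) satisfies `Witt index V = dim V / 2 - 1`. -/
theorem stmt15 [Fintype K] (hodd : Odd (Fintype.card K)) [FiniteDimensional K V]
    (f : LinearMap.BilinForm K V) (hsymm : f.IsSymm) (hnd : f.Nondegenerate)
    (φ : V ≃ₗ[K] V) (hφ : φ ∈ orthGroup f)
    (hoi : OrthIndec f (φ : V →ₗ[K] V)) (hmi : ModIndec (φ : V →ₗ[K] V))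
    (p : K[X]) (m : ℕ) (hp : p.Monic) (hirr : Irreducible p)
    (hp1 : p ≠ X - 1) (hp2 : p ≠ X + 1) (hm : Odd m)
    (hmin : minpoly K (φ : V →ₗ[K] V) = p ^ m) :
    wittIndex f = Module.finrank K V / 2 - 1 := by
  have hs : ∀ x y, f x y = f y x := fun x y => by simpa using hsymm.eq x y
  obtain ⟨E, hE, hno⟩ := key hodd f hsymm hnd φ hφ hmi p m hp hirr hp1 hp2 hm hmin
  have hup : ∀ W : Submodule K V, TI f W → finrank K W ≤ finrank K V / 2 - 1 := by
    intro W hW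
    have h1 := TI_le f hnd W hW
    have h2 := hno W hW
    omega
  obtain ⟨W, hW, hd⟩ := exists_big_TI hodd f hs hnd
  have h3 := hup W hW
  apply IsGreatest.csSup_eq
  refine ⟨⟨W, hW, by omega⟩, ?_⟩
  rintro n ⟨W', hW', rfl⟩
  exact hup W' hW'

end Biref
end

section
/- Let K be a field and let P, G be n × n matrices over K with PG = GPᵀ. If P is cyclic (its minimal polynomial equals its characteristic polynomial), then G is symmetric, i.e., G = Gᵀ. -/
open Polynomial Module

namespace Biref

variable {K V : Type*} [Field K] [AddCommGroup V] [Module K V]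

open Matrix in
theorem exists_cyclic_vec {n : ℕ} (Q : Matrix (Fin n) (Fin n) K) :
    ∃ v : Fin n → K, ∀ p : K[X], (aeval Q p) *ᵥ v = 0 → aeval Q p = 0 := by
  have key : ∀ p : K[X], aeval (Matrix.toLinAlgEquiv' Q) p = Matrix.toLinAlgEquiv' (aeval Q p) :=
    fun p => Polynomial.aeval_algHom_apply (Matrix.toLinAlgEquiv' : _ ≃ₐ[K] _).toAlgHom Q p
  obtain ⟨x, hx⟩ := Module.exists_ker_toSpanSingleton_eq_annihilator (R := K[X])
    (M := Module.AEval' (Matrix.toLinAlgEquiv' Q))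
  refine ⟨(Module.AEval'.of _).symm x, fun p hp => ?_⟩
  have h1 : p ∈ LinearMap.ker (LinearMap.toSpanSingleton K[X] _ x) := by
    rw [LinearMap.mem_ker, LinearMap.toSpanSingleton_apply]
    apply (Module.AEval'.of (Matrix.toLinAlgEquiv' Q)).symm.injective
    rw [map_zero]
    refine (Module.AEval.of_symm_smul _ p x).trans ?_
    rw [key]
    exact hp
  rw [hx, Module.mem_annihilator] at h1
  apply (Matrix.toLinAlgEquiv' : Matrix (Fin n) (Fin n) K ≃ₐ[K] _).injective
  rw [map_zero, ← key]
  ext1 i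
  apply LinearMap.ext
  intro w
  have h2 := congrArg (Module.AEval'.of (Matrix.toLinAlgEquiv' Q)).symm
    (h1 (Module.AEval'.of (Matrix.toLinAlgEquiv' Q) (LinearMap.single K (fun _ => K) i w)))
  rw [map_zero] at h2
  exact ((Module.AEval.of_symm_smul _ p _).symm.trans h2)

open Matrix in
/-- If `P G = G Pᵀ` and `P` is cyclic (minimal polynomial equals
characteristic polynomial), then `G` is symmetric. -/
theorem stmt17 {n : ℕ} (P G : Matrix (Fin n) (Fin n) K)
    (h : P * G = G * Pᵀ) (hcyc : minpoly K P = P.charpoly) :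
    G = Gᵀ := by
  have tr : ∀ p : K[X], (aeval P p)ᵀ = aeval Pᵀ p := fun p => by
    induction p using Polynomial.induction_on' with
    | add p q hp hq => simp [hp, hq]
    | monomial k a =>
      simp [aeval_monomial, Matrix.transpose_pow, Algebra.algebraMap_eq_smul_one]
  have comm : ∀ p : K[X], aeval P p * G = G * aeval Pᵀ p := fun p => by
    have hk : ∀ k : ℕ, P ^ k * G = G * Pᵀ ^ k := fun k => by
      induction k with
      | zero => simp
      | succ k ih => rw [pow_succ, mul_assoc, h, ← mul_assoc, ih, mul_assoc, ← pow_succ]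
    induction p using Polynomial.induction_on' with
    | add p q hp hq => simp [add_mul, mul_add, hp, hq]
    | monomial k a =>
      simp [aeval_monomial, Algebra.algebraMap_eq_smul_one, hk]
  obtain ⟨v, hv⟩ := exists_cyclic_vec Pᵀ
  let T : degreeLT K n →ₗ[K] (Fin n → K) :=
    (LinearMap.applyₗ v ∘ₗ (Matrix.toLinAlgEquiv' : Matrix (Fin n) (Fin n) K ≃ₐ[K] _).toLinearMap
      ∘ₗ (aeval Pᵀ : K[X] →ₐ[K] _).toLinearMap) ∘ₗ (degreeLT K n).subtype
  have hT : ∀ p, T p = (aeval Pᵀ (p : K[X])) *ᵥ v := fun p => rfl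
  have inj : Function.Injective T := by
    rw [injective_iff_map_eq_zero]
    intro p hp
    rw [hT] at hp
    have h0 := hv _ hp
    rw [← tr, Matrix.transpose_eq_zero] at h0
    have hd := minpoly.dvd K P h0
    rw [hcyc] at hd
    apply Subtype.ext
    refine Polynomial.eq_zero_of_dvd_of_degree_lt hd ?_
    rw [Matrix.charpoly_degree_eq_dim, Fintype.card_fin]
    exact mem_degreeLT.1 p.2
  have fr : finrank K (degreeLT K n) = finrank K (Fin n → K) :=
    (degreeLTEquiv K n).finrank_eq
  haveI : FiniteDimensional K (degreeLT K n) := Module.Finite.equiv (degreeLTEquiv K n).symm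
  have surj := (LinearMap.injective_iff_surjective_of_finrank_eq_finrank fr).1 inj
  have sw : ∀ p q : K[X], (aeval Pᵀ p *ᵥ v) ⬝ᵥ (G *ᵥ (aeval Pᵀ q *ᵥ v))
      = v ⬝ᵥ (G *ᵥ (aeval Pᵀ (p * q) *ᵥ v)) := fun p q => by
    rw [← tr p, Matrix.mulVec_transpose, ← Matrix.dotProduct_mulVec, Matrix.mulVec_mulVec, comm,
      map_mul, ← Matrix.mulVec_mulVec, ← Matrix.mulVec_mulVec]
  have sym : ∀ x y : Fin n → K, x ⬝ᵥ (G *ᵥ y) = y ⬝ᵥ (G *ᵥ x) := fun x y => by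
    obtain ⟨p, rfl⟩ := surj x
    obtain ⟨q, rfl⟩ := surj y
    rw [hT, hT, sw, sw, mul_comm]
  ext i j
  simpa using sym (Pi.single i 1) (Pi.single j 1)

end Biref
end
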